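/- Let Δ>0, let φ and P_A satisfy hypothesis (H2), let P_0 be a discrete distribution with finite support as described, let γ>0, and for ρ∈(0,1) set α(ρ) := γρ|ln ρ| and I(ρ) := inf_{q∈[0,E[X²]]} sup_{r≥0} i_RS(q,r;α(ρ),ρ). Then I(ρ) converges as ρ→0⁺ and lim_{ρ→0⁺} I(ρ) = min_{1≤k≤K+1} { I_{P_out}(E[X²·1{|X|≥v_k}], E[X²]) + ℙ(|X|≥v_k)/γ }, where v_{K+1} := +∞ (so the term k=K+1 reads I_{P_out}(0,E[X²])). -/

import Mathlib

open MeasureTheory ProbabilityTheory Real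

noncomputable section

namespace GLM

/-- Standard Gaussian measure on ℝ. -/
def stdG : Measure ℝ := gaussianReal 0 1

/-- `n` i.i.d. copies of a measure on ℝ. -/
def iid (n : ℕ) (μ : Measure ℝ) : Measure (Fin n → ℝ) := Measure.pi fun _ => μ

/-- The sparse prior `(1-ρ)δ₀ + ρ P₀`. -/
def sparsePrior (ρ : ℝ) (P0 : Measure ℝ) : Measure ℝ :=
  ENNReal.ofReal (1 - ρ) • Measure.dirac 0 + ENNReal.ofReal ρ • P0

/-- Second moment of a real measure. -/
def secondMoment (P : Measure ℝ) : ℝ := ∫ x, x ^ 2 ∂P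

/-- The transition density `P_out(y|x)`. -/
def Pout (Δ : ℝ) {kA : ℕ} (PA : Measure (Fin kA → ℝ)) (φ : ℝ → (Fin kA → ℝ) → ℝ)
    (y x : ℝ) : ℝ :=
  (Real.sqrt (2 * π * Δ))⁻¹ * ∫ a, Real.exp (-(y - φ x a) ^ 2 / (2 * Δ)) ∂PA

/-- Scalar channel mutual information `I_{P_out}(q, ρ')`. -/
def IPout (Δ : ℝ) {kA : ℕ} (PA : Measure (Fin kA → ℝ)) (φ : ℝ → (Fin kA → ℝ) → ℝ)
    (q ρ' : ℝ) : ℝ :=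
  (∫ v, ∫ a, ∫ z,
      Real.log (Pout Δ PA φ (φ (Real.sqrt ρ' * v) a + Real.sqrt Δ * z) (Real.sqrt ρ' * v))
      ∂stdG ∂PA ∂stdG)
  - ∫ v, ∫ w, ∫ a, ∫ z,
      Real.log (∫ w', Pout Δ PA φ
        (φ (Real.sqrt q * v + Real.sqrt (ρ' - q) * w) a + Real.sqrt Δ * z)
        (Real.sqrt q * v + Real.sqrt (ρ' - q) * w') ∂stdG) ∂stdG ∂PA ∂stdG ∂stdG

/-- `ψ_P(r)` for the scalar additive Gaussian channel with prior `P`. -/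
def psiP (P : Measure ℝ) (r : ℝ) : ℝ :=
  ∫ xs, ∫ z, Real.log (∫ x, Real.exp (r * xs * x + Real.sqrt r * z * x - r * x ^ 2 / 2) ∂P)
    ∂stdG ∂P

/-- `I_{P_{0,n}}(r)`. -/
def IP0 (ρ : ℝ) (P0 : Measure ℝ) (r : ℝ) : ℝ :=
  r * ρ * secondMoment P0 / 2 - psiP (sparsePrior ρ P0) r

/-- Replica symmetric potential. -/
def iRS (Δ : ℝ) {kA : ℕ} (PA : Measure (Fin kA → ℝ)) (φ : ℝ → (Fin kA → ℝ) → ℝ)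
    (P0 : Measure ℝ) (α ρ q r : ℝ) : ℝ :=
  (1 / α) * IP0 ρ P0 (α / ρ * r) + IPout Δ PA φ q (secondMoment P0)
    - r * (secondMoment P0 - q) / 2

/-- density of the observations given signal and matrix. -/
def pCond (Δ : ℝ) {kA : ℕ} (PA : Measure (Fin kA → ℝ)) (φ : ℝ → (Fin kA → ℝ) → ℝ)
    (n m : ℕ) (kn : ℝ) (Φ : Fin m → Fin n → ℝ) (x : Fin n → ℝ) (y : Fin m → ℝ) : ℝ :=
  ∏ μ, Pout Δ PA φ (y μ) ((∑ i, Φ μ i * x i) / Real.sqrt kn)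

/-- marginal density of the observations given the matrix. -/
def pMarg (Δ : ℝ) {kA : ℕ} (PA : Measure (Fin kA → ℝ)) (φ : ℝ → (Fin kA → ℝ) → ℝ)
    (n m : ℕ) (P : Measure ℝ) (kn : ℝ) (Φ : Fin m → Fin n → ℝ) (y : Fin m → ℝ) : ℝ :=
  ∫ x, pCond Δ PA φ n m kn Φ x y ∂(iid n P)

/-- The observations `Y`. -/
def Yobs (Δ : ℝ) {kA : ℕ} (φ : ℝ → (Fin kA → ℝ) → ℝ) (n m : ℕ) (kn : ℝ)
    (Φ : Fin m → Fin n → ℝ) (x : Fin n → ℝ) (a : Fin m → Fin kA → ℝ) (z : Fin m → ℝ) :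
    Fin m → ℝ :=
  fun μ => φ ((∑ i, Φ μ i * x i) / Real.sqrt kn) (a μ) + Real.sqrt Δ * z μ

/-- The conditional mutual information `I(X*;Y|Φ)`. -/
def MI (Δ : ℝ) {kA : ℕ} (PA : Measure (Fin kA → ℝ)) (φ : ℝ → (Fin kA → ℝ) → ℝ)
    (P0 : Measure ℝ) (ρ : ℝ) (n m : ℕ) : ℝ :=
  ∫ x, ∫ Φ, ∫ a, ∫ z,
    Real.log (pCond Δ PA φ n m (n * ρ) Φ x (Yobs Δ φ n m (n * ρ) Φ x a z)
      / pMarg Δ PA φ n m (sparsePrior ρ P0) (n * ρ) Φ (Yobs Δ φ n m (n * ρ) Φ x a z))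
    ∂(iid m stdG) ∂(Measure.pi fun _ : Fin m => PA) ∂(Measure.pi fun _ : Fin m => iid n stdG)
    ∂(iid n (sparsePrior ρ P0))

/-- The truncated second moment E[X^2 * 1(|X| >= v)]. -/
def truncSMge (P : Measure ℝ) (v : ℝ) : ℝ := ∫ x, if v ≤ |x| then x ^ 2 else 0 ∂P

/-- The tail probability P(|X| >= v). -/
def tailProb (P : Measure ℝ) (v : ℝ) : ℝ := (P {x | v ≤ |x|}).toReal

/-! Two facts drive the limit.

* The scalar channel with the sparse prior either pins the signal down or misses it: at a
  signal-to-noise ratio of order `|log ρ|`, its mutual information divided by `ρ` is the mean of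
  `min (r X ^ 2 / 2) |log ρ|`, up to `O(√|log ρ|)` uniformly in `r`. After division by
  `γ |log ρ|` the replica symmetric potential converges uniformly to an explicit potential in which
  this mean is capped at `1 / γ`.
* `q ↦ I_{P_out}(q, S)` is midpoint concave. Writing its second term as a conditional entropy of
  Gaussian smoothings of `P_out`, this is the subadditivity of the entropy of a function of two
  independent Gaussian increments.

In the limit potential the choice `r = 2 / (γ t ^ 2)` saturates the cap exactly at the amplitude
`t`. The potential is then midpoint concave in `q`, hence minimal at one of the two values of `q`
between which the signal entries of amplitude `t` are recovered, so only the truncated second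
moments compete for the minimum.
-/

instance isProbabilityMeasure_stdG : IsProbabilityMeasure stdG := by
  unfold stdG; infer_instance

section BoundedFunctions

lemma integral_mem_Icc {α : Type*} [MeasurableSpace α] {μ : Measure α} [IsProbabilityMeasure μ]
    {f : α → ℝ} (hf : Measurable f) {m M : ℝ} (h : ∀ x, f x ∈ Set.Icc m M) :
    ∫ x, f x ∂μ ∈ Set.Icc m M :=
  (convex_Icc m M).integral_mem isClosed_Icc (ae_of_all _ h)
    (.of_mem_Icc m M hf.aemeasurable (ae_of_all _ h))

lemma abs_mul_log_le {m M u w : ℝ} (hm : 0 < m) (hu : u ∈ Set.Icc m M) (hw : w ∈ Set.Icc m M) :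
    |u * log w| ≤ M * (|log m| + |log M|) := by
  have hM : 0 < M := hm.trans_le (hu.1.trans hu.2)
  have hlog : |log w| ≤ |log m| + |log M| := by
    have hl := log_le_log hm hw.1
    have hu := log_le_log (hm.trans_le hw.1) hw.2
    have := neg_abs_le (log m)
    have := le_abs_self (log M)
    exact abs_le.2 ⟨by linarith [abs_nonneg (log M)], by linarith [abs_nonneg (log m)]⟩
  rw [abs_mul, abs_of_pos (hm.trans_le hu.1)]
  exact mul_le_mul hu.2 hlog (abs_nonneg _) hM.le

lemma abs_negMulLog_le {m M u : ℝ} (hm : 0 < m) (hu : u ∈ Set.Icc m M) :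
    |negMulLog u| ≤ M * (|log m| + |log M|) := by
  rw [negMulLog, neg_mul, abs_neg]
  exact abs_mul_log_le hm hu hu

end BoundedFunctions

section EntropySubadditivity

lemma mul_log_add_mul_log_le {u a b e : ℝ} (hu : 0 < u) (ha : 0 < a) (hb : 0 < b) (he : 0 < e) :
    u * log a + u * log b ≤ u * log u + u * log e + (a * b * e⁻¹ - u) := by
  have h := mul_le_mul_of_nonneg_left (log_le_sub_one_of_pos (x := a * b * e⁻¹ / u) (by positivity))
    hu.le
  rw [log_div (by positivity) hu.ne', log_mul (by positivity) (by positivity),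
    log_mul ha.ne' hb.ne', log_inv] at h
  have hcancel : u * (a * b * e⁻¹ / u - 1) = a * b * e⁻¹ - u := by field_simp
  linarith

lemma integrable_mul_log_of_mem_Icc {α : Type*} [MeasurableSpace α] {κ : Measure α}
    [IsFiniteMeasure κ] {m M : ℝ} {f k : α → ℝ} (hf : Measurable f) (hk : Measurable k)
    (hm : 0 < m) (hfm : ∀ x, f x ∈ Set.Icc m M) (hkm : ∀ x, k x ∈ Set.Icc m M) :
    Integrable (fun x => f x * log (k x)) κ :=
  .of_bound (hf.mul hk.log).aestronglyMeasurable _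
    (ae_of_all _ fun x => abs_mul_log_le hm (hfm x) (hkm x))

variable {α β : Type*} [MeasurableSpace α] [MeasurableSpace β] {μ : Measure α} {ν : Measure β}
  [IsProbabilityMeasure μ] [IsProbabilityMeasure ν]

lemma integral_prod_mul_log_add_le {g : α × β → ℝ} {a : α → ℝ} {b : β → ℝ} {e m M : ℝ}
    (hg : Measurable g) (ha : Measurable a) (hb : Measurable b) (hm : 0 < m)
    (hgm : ∀ p, g p ∈ Set.Icc m M) (ham : ∀ x, a x ∈ Set.Icc m M) (hbm : ∀ y, b y ∈ Set.Icc m M)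
    (he : 0 < e) :
    ∫ p, g p * log (a p.1) ∂μ.prod ν + ∫ p, g p * log (b p.2) ∂μ.prod ν ≤
      ∫ p, g p * log (g p) ∂μ.prod ν + (∫ p, g p ∂μ.prod ν) * log e +
        ((∫ x, a x ∂μ) * (∫ y, b y ∂ν) * e⁻¹ - ∫ p, g p ∂μ.prod ν) := by
  have hi : Integrable g (μ.prod ν) := .of_mem_Icc m M hg.aemeasurable (ae_of_all _ hgm)
  have h₀ := integrable_mul_log_of_mem_Icc (κ := μ.prod ν) hg hg hm hgm hgm
  have ha' := integrable_mul_log_of_mem_Icc (κ := μ.prod ν) hg (ha.comp measurable_fst) hm hgm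
    fun p => ham p.1
  have hb' := integrable_mul_log_of_mem_Icc (κ := μ.prod ν) hg (hb.comp measurable_snd) hm hgm
    fun p => hbm p.2
  have hab : Integrable (fun p : α × β => a p.1 * b p.2 * e⁻¹) (μ.prod ν) :=
    (Integrable.mul_prod (.of_mem_Icc m M ha.aemeasurable (ae_of_all _ ham))
      (.of_mem_Icc m M hb.aemeasurable (ae_of_all _ hbm))).mul_const e⁻¹
  have h := integral_mono (ha'.add hb') ((h₀.add (hi.mul_const (log e))).add (hab.sub hi))
    fun p => mul_log_add_mul_log_le (hm.trans_le (hgm p).1) (hm.trans_le (ham p.1).1)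
      (hm.trans_le (hbm p.2).1) he
  rwa [integral_add' ha' hb', integral_add' (h₀.add (hi.mul_const _)) (hab.sub hi),
    integral_add' h₀ (hi.mul_const _), integral_sub' hab hi, integral_mul_const,
    integral_mul_const, integral_prod_mul] at h

/-- The bracket in `integral_prod_mul_log_add_le` vanishes when `a` and `b` are the marginals of `g`
and `e` is its total mass. -/
lemma integral_negMulLog_add_negMulLog_integral_le {g : α × β → ℝ} {m M : ℝ} (hg : Measurable g)
    (hm : 0 < m) (hgm : ∀ p, g p ∈ Set.Icc m M) :
    ∫ a, ∫ b, negMulLog (g (a, b)) ∂ν ∂μ + negMulLog (∫ a, ∫ b, g (a, b) ∂ν ∂μ) ≤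
      ∫ a, negMulLog (∫ b, g (a, b) ∂ν) ∂μ + ∫ b, negMulLog (∫ a, g (a, b) ∂μ) ∂ν := by
  set g₁ : α → ℝ := fun a => ∫ b, g (a, b) ∂ν
  set g₂ : β → ℝ := fun b => ∫ a, g (a, b) ∂μ
  set e := ∫ a, g₁ a ∂μ
  have hg₁ : Measurable g₁ := hg.stronglyMeasurable.integral_prod_right'.measurable
  have hg₂ : Measurable g₂ := hg.stronglyMeasurable.integral_prod_left'.measurable
  have hg₁m a : g₁ a ∈ Set.Icc m M := integral_mem_Icc (by fun_prop) fun b => hgm (a, b)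
  have hg₂m b : g₂ b ∈ Set.Icc m M := integral_mem_Icc (by fun_prop) fun a => hgm (a, b)
  have he : 0 < e := hm.trans_le (integral_mem_Icc hg₁ hg₁m).1
  have hi : Integrable g (μ.prod ν) := .of_mem_Icc m M hg.aemeasurable (ae_of_all _ hgm)
  have h := integral_prod_mul_log_add_le (μ := μ) (ν := ν) hg hg₁ hg₂ hm hgm hg₁m hg₂m he
  have he₂ : ∫ b, g₂ b ∂ν = e := (integral_prod_symm _ hi).symm.trans (integral_prod _ hi)
  have h₁ : ∫ p, g p * log (g₁ p.1) ∂μ.prod ν = ∫ a, g₁ a * log (g₁ a) ∂μ := by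
    rw [integral_prod _ (integrable_mul_log_of_mem_Icc hg (by fun_prop) hm hgm fun p => hg₁m p.1)]
    simp only [integral_mul_const, g₁]
  have h₂ : ∫ p, g p * log (g₂ p.2) ∂μ.prod ν = ∫ b, g₂ b * log (g₂ b) ∂ν := by
    rw [integral_prod_symm _
      (integrable_mul_log_of_mem_Icc hg (by fun_prop) hm hgm fun p => hg₂m p.2)]
    simp only [integral_mul_const, g₂]
  rw [h₁, h₂, integral_prod _ (integrable_mul_log_of_mem_Icc hg hg hm hgm hgm), he₂,
    mul_inv_cancel_right₀ he.ne', integral_prod _ hi, sub_self, add_zero] at h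
  simp only [negMulLog, neg_mul, integral_neg]
  linarith

end EntropySubadditivity

section HeatSemigroup

/-- The Gaussian heat semigroup: average of `F` over a Gaussian of mean `x` and variance `t`. -/
def heat (t : ℝ) (F : ℝ → ℝ) (x : ℝ) : ℝ := ∫ w, F (x + √t * w) ∂stdG

lemma map_stdG_add_sqrt_mul (m : ℝ) {t : ℝ} (ht : 0 ≤ t) :
    stdG.map (fun z => m + √t * z) = gaussianReal m t.toNNReal := by
  have hvar : NNReal.mk (√t ^ 2) (sq_nonneg _) * 1 = t.toNNReal := by
    rw [mul_one]
    exact NNReal.eq ((sq_sqrt ht).trans (coe_toNNReal t ht).symm)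
  have hcomp : (fun z => m + √t * z) = (m + ·) ∘ (√t * ·) := rfl
  rw [hcomp, ← Measure.map_map (by fun_prop) (by fun_prop), stdG, gaussianReal_map_const_mul,
    gaussianReal_map_const_add, hvar, mul_zero, add_comm, add_zero]

variable {F : ℝ → ℝ}

lemma heat_eq_integral_gaussianReal (hF : Measurable F) {t : ℝ} (ht : 0 ≤ t) (x : ℝ) :
    heat t F x = ∫ u, F u ∂gaussianReal x t.toNNReal := by
  rw [← map_stdG_add_sqrt_mul x ht, integral_map (by fun_prop) hF.aestronglyMeasurable]
  rfl

lemma measurable_uncurry_heat {Y : Type*} [MeasurableSpace Y] {p : Y → ℝ → ℝ}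
    (hp : Measurable (Function.uncurry p)) (t : ℝ) :
    Measurable (Function.uncurry fun y => heat t (p y)) := by
  have h : Measurable fun u : (Y × ℝ) × ℝ => p u.1.1 (u.1.2 + √t * u.2) :=
    hp.comp (by fun_prop : Measurable fun u : (Y × ℝ) × ℝ => (u.1.1, u.1.2 + √t * u.2))
  exact h.stronglyMeasurable.integral_prod_right'.measurable

lemma measurable_heat (hF : Measurable F) (t : ℝ) : Measurable (heat t F) :=
  (measurable_uncurry_heat (p := fun _ : Unit => F) (hF.comp measurable_snd) t).of_uncurry_left
    (x := ())

lemma heat_mem_Icc (hF : Measurable F) {m M : ℝ} (hFm : ∀ x, F x ∈ Set.Icc m M) (t x : ℝ) :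
    heat t F x ∈ Set.Icc m M :=
  integral_mem_Icc (by fun_prop) fun _ => hFm _

lemma integrable_comp_sqrt_mul (hF : Measurable F) {m M : ℝ} (hFm : ∀ x, F x ∈ Set.Icc m M)
    (t x : ℝ) : Integrable (fun w => F (x + √t * w)) stdG :=
  .of_mem_Icc m M (Measurable.aemeasurable (by fun_prop)) (ae_of_all _ fun _ => hFm _)

lemma heat_heat (hF : Measurable F) {m M : ℝ} (hFm : ∀ x, F x ∈ Set.Icc m M) {s t : ℝ}
    (hs : 0 ≤ s) (ht : 0 ≤ t) : heat s (heat t F) = heat (s + t) F := by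
  funext x
  have hconv : gaussianReal x s.toNNReal ∗ gaussianReal 0 t.toNNReal =
      gaussianReal x (s + t).toNNReal := by
    rw [gaussianReal_conv_gaussianReal, add_zero, toNNReal_add hs ht]
  have hinner (u : ℝ) : heat t F u = ∫ v, F (u + v) ∂gaussianReal 0 t.toNNReal := by
    rw [← heat_eq_integral_gaussianReal (F := fun v => F (u + v)) (by fun_prop) ht]
    simp only [heat, zero_add]
  rw [heat_eq_integral_gaussianReal hF (add_nonneg hs ht), ← hconv,
    integral_conv (.of_mem_Icc m M hF.aemeasurable (ae_of_all _ hFm)),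
    heat_eq_integral_gaussianReal (measurable_heat hF t) hs]
  simp only [hinner]

end HeatSemigroup

section MidpointConcavity

/-- Midpoint concavity of `f` on `s`, with no continuity assumed. -/
def MidpointConcaveOn (s : Set ℝ) (f : ℝ → ℝ) : Prop :=
  ∀ ⦃x⦄, x ∈ s → ∀ ⦃y⦄, y ∈ s → f x + f y ≤ 2 * f ((x + y) / 2)

lemma MidpointConcaveOn.mono {s t : Set ℝ} {f : ℝ → ℝ} (hf : MidpointConcaveOn t f) (h : s ⊆ t) :
    MidpointConcaveOn s f := fun _ hx _ hy => hf (h hx) (h hy)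

lemma MidpointConcaveOn.add_linear {s : Set ℝ} {f : ℝ → ℝ} (hf : MidpointConcaveOn s f) (a b : ℝ) :
    MidpointConcaveOn s fun x => f x + (a * x + b) := fun x hx y hy => by
  linarith [hf hx hy]

/-- Reflecting the nearer endpoint in a point where `f` almost attains its infimum would produce a
strictly smaller value, so boundedness below replaces continuity. -/
lemma MidpointConcaveOn.min_le {f : ℝ → ℝ} {a b : ℝ} (hf : MidpointConcaveOn (Set.Icc a b) f)
    (hbdd : BddBelow (f '' Set.Icc a b)) {x : ℝ} (hx : x ∈ Set.Icc a b) :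
    min (f a) (f b) ≤ f x := by
  by_contra! hlt
  set I := sInf (f '' Set.Icc a b)
  have hI {y : ℝ} (hy : y ∈ Set.Icc a b) : I ≤ f y := csInf_le hbdd (Set.mem_image_of_mem f hy)
  have hgap : I < (I + min (f a) (f b)) / 2 := by linarith [hI hx]
  obtain ⟨-, ⟨c, hc, rfl⟩, hfc⟩ := exists_lt_of_csInf_lt ⟨_, Set.mem_image_of_mem f hx⟩ hgap
  rcases le_total c ((a + b) / 2) with hca | hcb
  · have hrefl : 2 * c - a ∈ Set.Icc a b := ⟨by linarith [hc.1], by linarith⟩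
    have h := hf (Set.left_mem_Icc.2 (hc.1.trans hc.2)) hrefl
    rw [add_sub_cancel, mul_div_cancel_left₀ c two_ne_zero] at h
    linarith [hI hrefl, min_le_left (f a) (f b)]
  · have hrefl : 2 * c - b ∈ Set.Icc a b := ⟨by linarith, by linarith [hc.2]⟩
    have h := hf (Set.right_mem_Icc.2 (hc.1.trans hc.2)) hrefl
    rw [add_sub_cancel, mul_div_cancel_left₀ c two_ne_zero] at h
    linarith [hI hrefl, min_le_right (f a) (f b)]

end MidpointConcavity

section EntropyAlongHeatFlow

variable {F : ℝ → ℝ} {m M : ℝ}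

/-- Subadditivity of entropy for the function `(n, n') ↦ F (x + √h n + √h n')`. -/
lemma heat_heat_negMulLog_add_le (hF : Measurable F) (hm : 0 < m) (hFm : ∀ x, F x ∈ Set.Icc m M)
    (h x : ℝ) :
    heat h (heat h (negMulLog ∘ F)) x + negMulLog (heat h (heat h F) x) ≤
      2 * heat h (negMulLog ∘ heat h F) x := by
  have hsub := integral_negMulLog_add_negMulLog_integral_le (μ := stdG) (ν := stdG)
    (g := fun n => F (x + √h * n.1 + √h * n.2)) (by fun_prop) hm fun n => hFm _
  simp only [add_right_comm x (√h * _) (√h * _)] at hsub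
  rw [two_mul]
  simpa only [heat, Function.comp_apply, add_right_comm x (√h * _) (√h * _)] using hsub

lemma negMulLog_comp_mem_Icc (hm : 0 < m) (hFm : ∀ x, F x ∈ Set.Icc m M) (x : ℝ) :
    (negMulLog ∘ F) x ∈
      Set.Icc (-(M * (|log m| + |log M|))) (M * (|log m| + |log M|)) :=
  abs_le.1 (abs_negMulLog_le hm (hFm x))

lemma heat_negMulLog_add_le (hF : Measurable F) (hm : 0 < m) (hFm : ∀ x, F x ∈ Set.Icc m M)
    {r t h : ℝ} (hr : 0 ≤ r) (ht : 0 ≤ t) (hh : 0 ≤ h) (x : ℝ) :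
    heat (r + h + h) (negMulLog ∘ heat t F) x + heat r (negMulLog ∘ heat (t + h + h) F) x ≤
      2 * heat (r + h) (negMulLog ∘ heat (t + h) F) x := by
  have hmeas (s : ℝ) : Measurable (negMulLog ∘ heat s F) :=
    continuous_negMulLog.measurable.comp (measurable_heat hF s)
  have hbound (s : ℝ) := negMulLog_comp_mem_Icc hm (heat_mem_Icc hF hFm s)
  have hpointwise (u : ℝ) : heat h (heat h (negMulLog ∘ heat t F)) u +
      negMulLog (heat (t + h + h) F u) ≤ 2 * heat h (negMulLog ∘ heat (t + h) F) u := by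
    rw [show t + h + h = h + (h + t) by ring, add_comm t h,
      ← heat_heat hF hFm hh (add_nonneg hh ht), ← heat_heat hF hFm hh ht]
    exact heat_heat_negMulLog_add_le (measurable_heat hF t) hm (heat_mem_Icc hF hFm t) h u
  have hmeas₁ := measurable_heat (hmeas (t + h)) h
  have hmeas₂ := measurable_heat (measurable_heat (hmeas t) h) h
  have hbound₁ := heat_mem_Icc (hmeas (t + h)) (hbound (t + h)) h
  have hbound₂ := heat_mem_Icc (measurable_heat (hmeas t) h) (heat_mem_Icc (hmeas t) (hbound t) h) h
  have hi₂ := integrable_comp_sqrt_mul hmeas₂ hbound₂ r x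
  have hi₀ := integrable_comp_sqrt_mul (hmeas (t + h + h)) (hbound (t + h + h)) r x
  have hmono := integral_mono (hi₂.add hi₀)
    ((integrable_comp_sqrt_mul hmeas₁ hbound₁ r x).const_mul 2) fun w => hpointwise (x + √r * w)
  rw [integral_add' hi₂ hi₀, integral_const_mul] at hmono
  rw [add_assoc r h h, ← heat_heat (hmeas t) (hbound t) hr (add_nonneg hh hh),
    ← heat_heat (hmeas t) (hbound t) hh hh, ← heat_heat (hmeas _) (hbound _) hr hh]
  exact hmono

lemma midpointConcaveOn_heat_negMulLog (hF : Measurable F) (hm : 0 < m)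
    (hFm : ∀ x, F x ∈ Set.Icc m M) (S x : ℝ) :
    MidpointConcaveOn (Set.Icc 0 S) fun q => heat q (negMulLog ∘ heat (S - q) F) x := by
  intro q hq q' hq'
  wlog hle : q ≤ q' generalizing q q'
  · rw [add_comm, add_comm q q']
    exact this hq' hq (le_of_not_ge hle)
  rw [add_comm]
  convert heat_negMulLog_add_le hF hm hFm hq.1 (sub_nonneg.2 hq'.2)
    (h := (q' - q) / 2) (by linarith) x using 5 <;> ring

end EntropyAlongHeatFlow

section DominatedKernel

variable {Y : Type*} [MeasurableSpace Y]

/-- A measurable family `p y` of functions on `ℝ`, each squeezed between two positive constants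
`m y ≤ M y`, the natural bound on `|p y * log (p y)|` being `κ`-integrable in `y`. It abstracts the
transition density of an output channel. -/
structure IsDominatedKernel (κ : Measure Y) (p : Y → ℝ → ℝ) (m M : Y → ℝ) : Prop where
  measurable : Measurable (Function.uncurry p)
  pos : ∀ y, 0 < m y
  mem_Icc : ∀ y x, p y x ∈ Set.Icc (m y) (M y)
  integrable_bound : Integrable (fun y => M y * (|log (m y)| + |log (M y)|)) κ

/-- Conditional differential entropy of the output given `√q V`, when the channel `p` is fed with
`√q V + √(S - q) W`, for `V` and `W` independent standard Gaussians. -/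
def condEntropy (κ : Measure Y) (p : Y → ℝ → ℝ) (S q : ℝ) : ℝ :=
  ∫ y, heat q (negMulLog ∘ heat (S - q) (p y)) 0 ∂κ

namespace IsDominatedKernel

variable {κ : Measure Y} {p : Y → ℝ → ℝ} {m M : Y → ℝ}

lemma measurable_apply (hp : IsDominatedKernel κ p m M) (y : Y) : Measurable (p y) :=
  hp.measurable.of_uncurry_left

protected lemma heat_mem_Icc (hp : IsDominatedKernel κ p m M) (t : ℝ) (y : Y) (x : ℝ) :
    heat t (p y) x ∈ Set.Icc (m y) (M y) :=
  heat_mem_Icc (hp.measurable_apply y) (hp.mem_Icc y) t x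

lemma measurable_uncurry_negMulLog_heat (hp : IsDominatedKernel κ p m M) (t : ℝ) :
    Measurable (Function.uncurry fun y => negMulLog ∘ heat t (p y)) :=
  continuous_negMulLog.measurable.comp (measurable_uncurry_heat hp.measurable t)

lemma abs_heat_negMulLog_heat_le (hp : IsDominatedKernel κ p m M) (s t x : ℝ) (y : Y) :
    |heat s (negMulLog ∘ heat t (p y)) x| ≤ M y * (|log (m y)| + |log (M y)|) :=
  abs_le.2 (heat_mem_Icc (hp.measurable_uncurry_negMulLog_heat t).of_uncurry_left
    (negMulLog_comp_mem_Icc (hp.pos y) (hp.heat_mem_Icc t y)) s x)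

lemma integrable_heat_negMulLog_heat (hp : IsDominatedKernel κ p m M) (s t x : ℝ) :
    Integrable (fun y => heat s (negMulLog ∘ heat t (p y)) x) κ :=
  hp.integrable_bound.mono' (measurable_uncurry_heat (hp.measurable_uncurry_negMulLog_heat t)
    s).of_uncurry_right.aestronglyMeasurable (ae_of_all _ (hp.abs_heat_negMulLog_heat_le s t x))

lemma abs_condEntropy_le (hp : IsDominatedKernel κ p m M) (S q : ℝ) :
    |condEntropy κ p S q| ≤ ∫ y, M y * (|log (m y)| + |log (M y)|) ∂κ :=
  (abs_integral_le_integral_abs).trans <|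
    integral_mono (hp.integrable_heat_negMulLog_heat q _ 0).abs hp.integrable_bound
      (hp.abs_heat_negMulLog_heat_le q _ 0)

lemma midpointConcaveOn_condEntropy (hp : IsDominatedKernel κ p m M) (S : ℝ) :
    MidpointConcaveOn (Set.Icc 0 S) (condEntropy κ p S) := fun q hq q' hq' => by
  have hi (t : ℝ) := hp.integrable_heat_negMulLog_heat t (S - t) 0
  unfold condEntropy
  rw [← integral_add (hi q) (hi q'), ← integral_const_mul]
  exact integral_mono ((hi q).add (hi q')) ((hi _).const_mul 2) fun y =>
    midpointConcaveOn_heat_negMulLog (hp.measurable_apply y) (hp.pos y) (hp.mem_Icc y) S 0 hq hq'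

lemma integrable_mul_log [SFinite κ] (hp : IsDominatedKernel κ p m M) {f k : ℝ × Y → ℝ}
    (hf : Measurable f) (hk : Measurable k) (hfm : ∀ u, f u ∈ Set.Icc (m u.2) (M u.2))
    (hkm : ∀ u, k u ∈ Set.Icc (m u.2) (M u.2)) :
    Integrable (fun u => f u * log (k u)) (stdG.prod κ) :=
  (hp.integrable_bound.comp_snd stdG).mono' (hf.mul hk.log).aestronglyMeasurable
    (ae_of_all _ fun u => abs_mul_log_le (hp.pos u.2) (hfm u) (hkm u))

lemma integral_integral_mul_log_heat [SFinite κ] (hp : IsDominatedKernel κ p m M) (t x : ℝ) :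
    ∫ w, ∫ y, p y (x + √t * w) * log (heat t (p y) x) ∂κ ∂stdG =
      ∫ y, heat t (p y) x * log (heat t (p y) x) ∂κ := by
  rw [integral_integral_swap]
  · simp only [integral_mul_const]
    rfl
  · exact hp.integrable_mul_log
      (hp.measurable.comp (by fun_prop : Measurable fun u : ℝ × Y => (u.2, x + √t * u.1)))
      ((measurable_uncurry_heat hp.measurable t).comp
        (by fun_prop : Measurable fun u : ℝ × Y => (u.2, x)))
      (fun u => hp.mem_Icc _ _) fun u => hp.heat_mem_Icc _ _ _

lemma integral_mul_log_heat_eq_neg_condEntropy [SFinite κ] (hp : IsDominatedKernel κ p m M)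
    (S q : ℝ) :
    ∫ v, ∫ w, ∫ y, p y (√q * v + √(S - q) * w) * log (heat (S - q) (p y) (√q * v)) ∂κ ∂stdG ∂stdG =
      -condEntropy κ p S q := by
  have hmeas : Measurable fun u : ℝ × Y => heat (S - q) (p u.2) (√q * u.1) :=
    (measurable_uncurry_heat hp.measurable (S - q)).comp
      (by fun_prop : Measurable fun u : ℝ × Y => (u.2, √q * u.1))
  simp only [hp.integral_integral_mul_log_heat]
  rw [integral_integral_swap, condEntropy, ← integral_neg]
  · simp only [heat, Function.comp_apply, negMulLog, neg_mul, integral_neg, neg_neg, zero_add]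
  · exact hp.integrable_mul_log hmeas hmeas (fun u => hp.heat_mem_Icc _ _ _)
      fun u => hp.heat_mem_Icc _ _ _

end IsDominatedKernel

end DominatedKernel

section OutputChannel

lemma integrable_exp_neg_mul_sq_mul_abs {b : ℝ} (hb : 0 < b) (c d : ℝ) :
    Integrable fun y : ℝ => exp (-b * y ^ 2) * |c + d * y ^ 2| := by
  have hsq := integrable_rpow_mul_exp_neg_mul_sq hb (s := 2) (by norm_num)
  refine ((((integrable_exp_neg_mul_sq hb).const_mul c).add (hsq.const_mul d)).abs).congr
    (ae_of_all _ fun y => ?_)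
  simp only [Pi.add_apply, rpow_two]
  rw [← abs_of_pos (exp_pos (-b * y ^ 2)), ← abs_mul, abs_of_pos (exp_pos _)]
  ring_nf

/-- Lower envelope of the densities of `N(m, Δ)` over `|m| ≤ B`. -/
def gaussianLower (Δ B y : ℝ) : ℝ := (√(2 * π * Δ))⁻¹ * exp (-(B ^ 2 / Δ)) * exp (-Δ⁻¹ * y ^ 2)

/-- Upper envelope of the densities of `N(m, Δ)` over `|m| ≤ B`. -/
def gaussianUpper (Δ B y : ℝ) : ℝ :=
  (√(2 * π * Δ))⁻¹ * exp (B ^ 2 / (2 * Δ)) * exp (-(4 * Δ)⁻¹ * y ^ 2)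

variable {Δ : ℝ}

lemma gaussianPDFReal_mem_Icc (hΔ : 0 < Δ) {B m : ℝ} (hm : |m| ≤ B) (y : ℝ) :
    gaussianPDFReal m Δ.toNNReal y ∈ Set.Icc (gaussianLower Δ B y) (gaussianUpper Δ B y) := by
  have hsq : m ^ 2 ≤ B ^ 2 := sq_le_sq.2 (hm.trans (le_abs_self B))
  rw [gaussianPDFReal, coe_toNNReal Δ hΔ.le, gaussianLower, gaussianUpper, mul_assoc _ (exp _),
    mul_assoc _ (exp _), ← exp_add, ← exp_add]
  constructor
  · refine mul_le_mul_of_nonneg_left (exp_le_exp.2 (sub_nonneg.1 ?_)) (by positivity)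
    have : -(y - m) ^ 2 / (2 * Δ) - (-(B ^ 2 / Δ) + -Δ⁻¹ * y ^ 2) =
        ((y + m) ^ 2 + 2 * (B ^ 2 - m ^ 2)) / (2 * Δ) := by
      field_simp
      ring
    rw [this]
    exact div_nonneg (by nlinarith [sq_nonneg (y + m)]) (by positivity)
  · refine mul_le_mul_of_nonneg_left (exp_le_exp.2 (sub_nonneg.1 ?_)) (by positivity)
    have : B ^ 2 / (2 * Δ) + -(4 * Δ)⁻¹ * y ^ 2 - -(y - m) ^ 2 / (2 * Δ) =
        (2 * (B ^ 2 - m ^ 2) + (y - 2 * m) ^ 2) / (4 * Δ) := by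
      field_simp
      ring
    rw [this]
    exact div_nonneg (by nlinarith [sq_nonneg (y - 2 * m)]) (by positivity)

lemma gaussianLower_pos (hΔ : 0 < Δ) (B y : ℝ) : 0 < gaussianLower Δ B y := by
  unfold gaussianLower
  positivity

lemma integrable_gaussianUpper_mul_abs_log (hΔ : 0 < Δ) (B : ℝ) :
    Integrable fun y =>
      gaussianUpper Δ B y * (|log (gaussianLower Δ B y)| + |log (gaussianUpper Δ B y)|) := by
  have hlog {c : ℝ} (hc : 0 < c) (d y : ℝ) : log (c * exp (d * y ^ 2)) = log c + d * y ^ 2 := by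
    rw [log_mul hc.ne' (exp_pos _).ne', log_exp]
  have hi := integrable_exp_neg_mul_sq_mul_abs (b := (4 * Δ)⁻¹) (by positivity)
  unfold gaussianLower gaussianUpper
  simp only [hlog (show 0 < (√(2 * π * Δ))⁻¹ * exp (-(B ^ 2 / Δ)) by positivity),
    hlog (show 0 < (√(2 * π * Δ))⁻¹ * exp (B ^ 2 / (2 * Δ)) by positivity), mul_add]
  simp only [mul_assoc _ (exp (-(4 * Δ)⁻¹ * _))]
  exact ((hi _ _).const_mul _).add ((hi _ _).const_mul _)

lemma heat_eq_integral_gaussianPDFReal_mul {g : ℝ → ℝ} (hg : Measurable g) (hΔ : 0 < Δ) (x : ℝ) :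
    heat Δ g x = ∫ y, gaussianPDFReal x Δ.toNNReal y * g y := by
  rw [heat_eq_integral_gaussianReal hg hΔ.le,
    integral_gaussianReal_eq_integral_smul (toNNReal_pos.2 hΔ).ne']
  rfl

variable {kA : ℕ} {PA : Measure (Fin kA → ℝ)} {φ : ℝ → (Fin kA → ℝ) → ℝ}

lemma Pout_eq_integral_gaussianPDFReal (hΔ : 0 < Δ) (y x : ℝ) :
    Pout Δ PA φ y x = ∫ a, gaussianPDFReal (φ x a) Δ.toNNReal y ∂PA := by
  simp only [Pout, gaussianPDFReal, coe_toNNReal Δ hΔ.le, integral_const_mul]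

variable [IsProbabilityMeasure PA]

lemma isDominatedKernel_Pout (hφ : Measurable fun p : ℝ × (Fin kA → ℝ) => φ p.1 p.2) {B : ℝ}
    (hB : ∀ x a, |φ x a| ≤ B) (hΔ : 0 < Δ) :
    IsDominatedKernel volume (Pout Δ PA φ) (gaussianLower Δ B) (gaussianUpper Δ B) where
  measurable := by
    have h : Measurable fun u : (ℝ × ℝ) × (Fin kA → ℝ) =>
        exp (-(u.1.1 - φ u.1.2 u.2) ^ 2 / (2 * Δ)) := by
      have := hφ.comp (by fun_prop : Measurable fun u : (ℝ × ℝ) × (Fin kA → ℝ) => (u.1.2, u.2))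
      fun_prop
    exact h.stronglyMeasurable.integral_prod_right'.measurable.const_mul _
  pos := gaussianLower_pos hΔ B
  mem_Icc y x := by
    rw [Pout_eq_integral_gaussianPDFReal hΔ]
    have : Measurable (φ x) := hφ.of_uncurry_left
    exact integral_mem_Icc (by unfold gaussianPDFReal; fun_prop)
      fun a => gaussianPDFReal_mem_Icc hΔ (hB x a) y
  integrable_bound := integrable_gaussianUpper_mul_abs_log hΔ B

lemma integral_heat_eq_integral_Pout_mul
    (hφ : Measurable fun p : ℝ × (Fin kA → ℝ) => φ p.1 p.2) {B : ℝ} (hB : ∀ x a, |φ x a| ≤ B)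
    (hΔ : 0 < Δ) {g : ℝ → ℝ} (hg : Measurable g)
    (hint : Integrable fun y => gaussianUpper Δ B y * |g y|) (x : ℝ) :
    ∫ a, heat Δ g (φ x a) ∂PA = ∫ y, Pout Δ PA φ y x * g y := by
  simp only [heat_eq_integral_gaussianPDFReal_mul hg hΔ]
  rw [integral_integral_swap]
  · simp only [integral_mul_const, Pout_eq_integral_gaussianPDFReal hΔ]
  · refine (hint.comp_snd PA).mono' ?_ (ae_of_all _ fun u => ?_)
    · have : Measurable (φ x) := hφ.of_uncurry_left
      exact Measurable.aestronglyMeasurable (by unfold gaussianPDFReal; fun_prop)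
    · rw [Function.uncurry_apply_pair, norm_mul, norm_of_nonneg (gaussianPDFReal_nonneg _ _ _)]
      exact mul_le_mul_of_nonneg_right (gaussianPDFReal_mem_Icc hΔ (hB x u.1) u.2).2 (abs_nonneg _)

lemma exists_IPout_eq_add_condEntropy (hφ : Measurable fun p : ℝ × (Fin kA → ℝ) => φ p.1 p.2)
    {B : ℝ} (hB : ∀ x a, |φ x a| ≤ B) (hΔ : 0 < Δ) (S : ℝ) :
    ∃ c, ∀ q, IPout Δ PA φ q S = condEntropy volume (Pout Δ PA φ) S q + c := by
  have hK := isDominatedKernel_Pout (PA := PA) hφ hB hΔ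
  refine ⟨_, fun q => (sub_eq_neg_add _ _).trans (congrArg₂ (· + ·) ?_ rfl)⟩
  rw [neg_eq_iff_eq_neg, ← hK.integral_mul_log_heat_eq_neg_condEntropy]
  congr! with v w
  set H : ℝ → ℝ := fun y => heat (S - q) (Pout Δ PA φ y) (√q * v)
  have hH : Measurable H := (measurable_uncurry_heat hK.measurable (S - q)).of_uncurry_right
  have hHm (y : ℝ) := hK.heat_mem_Icc (S - q) y (√q * v)
  have hU : Measurable (gaussianUpper Δ B) := by unfold gaussianUpper; fun_prop
  refine integral_heat_eq_integral_Pout_mul hφ hB hΔ hH.log (hK.integrable_bound.mono'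
    (hU.mul hH.log.norm).aestronglyMeasurable (ae_of_all _ fun y => ?_)) _
  rw [norm_mul, norm_eq_abs |_|, abs_abs, norm_eq_abs, ← abs_mul]
  exact abs_mul_log_le (hK.pos y) (Set.right_mem_Icc.2 ((hHm y).1.trans (hHm y).2)) (hHm y)

lemma midpointConcaveOn_IPout (hφ : Measurable fun p : ℝ × (Fin kA → ℝ) => φ p.1 p.2)
    (hB : ∃ B, ∀ x a, |φ x a| ≤ B) (hΔ : 0 < Δ) (S : ℝ) :
    MidpointConcaveOn (Set.Icc 0 S) fun q => IPout Δ PA φ q S := by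
  obtain ⟨B, hB⟩ := hB
  obtain ⟨c, hc⟩ := exists_IPout_eq_add_condEntropy (PA := PA) hφ hB hΔ S
  simpa only [hc, zero_mul, zero_add] using
    ((isDominatedKernel_Pout (PA := PA) hφ hB hΔ).midpointConcaveOn_condEntropy S).add_linear 0 c

lemma bddBelow_range_IPout (hφ : Measurable fun p : ℝ × (Fin kA → ℝ) => φ p.1 p.2)
    (hB : ∃ B, ∀ x a, |φ x a| ≤ B) (hΔ : 0 < Δ) (S : ℝ) :
    BddBelow (Set.range fun q => IPout Δ PA φ q S) := by
  obtain ⟨B, hB⟩ := hB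
  obtain ⟨c, hc⟩ := exists_IPout_eq_add_condEntropy (PA := PA) hφ hB hΔ S
  refine ⟨-(∫ y, gaussianUpper Δ B y * (|log (gaussianLower Δ B y)| + |log (gaussianUpper Δ B y)|))
    + c, ?_⟩
  rintro - ⟨q, rfl⟩
  simp only [hc, add_le_add_iff_right]
  exact (abs_le.1 ((isDominatedKernel_Pout hφ hB hΔ).abs_condEntropy_le S q)).1

end OutputChannel

section FiniteSupport

variable {P : Measure ℝ} [IsFiniteMeasure P] {T : Finset ℝ}

lemma integrable_of_ae_mem_finset (h : ∀ᵐ x ∂P, x ∈ T) (f : ℝ → ℝ) : Integrable f P := by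
  have hf : IntegrableOn f T P := .finset
  rwa [IntegrableOn, Measure.restrict_eq_self_of_ae_mem (by simpa using h)] at hf

lemma ae_pos_measureReal_singleton (h : ∀ᵐ x ∂P, x ∈ T) : ∀ᵐ x ∂P, 0 < P.real {x} := by
  have hT : ∀ᵐ x ∂P, ∀ y ∈ T, x = y → 0 < P.real {y} := by
    refine (ae_ball_iff T.countable_toSet).2 fun y _ => ?_
    rcases eq_or_ne (P {y}) 0 with hy | hy
    · filter_upwards [compl_mem_ae_iff.2 hy] with x hx hxy using absurd hxy hx
    · exact ae_of_all _ fun _ _ => ENNReal.toReal_pos hy (measure_ne_top _ _)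
  filter_upwards [hT, h] with x hx hxT using hx x hxT rfl

lemma exists_pos_le_measureReal_singleton (h : ∀ᵐ x ∂P, x ∈ T) :
    ∃ c > 0, ∀ᵐ x ∂P, c ≤ P.real {x} := by
  have hatom : ∀ᵐ x ∂P, x ∈ T.filter fun x => 0 < P.real {x} := by
    filter_upwards [h, ae_pos_measureReal_singleton h] with x hx hx' using
      Finset.mem_filter.2 ⟨hx, hx'⟩
  rcases (T.filter fun x => 0 < P.real {x}).eq_empty_or_nonempty with hempty | hne
  · exact ⟨1, one_pos, hatom.mono fun x hx => absurd hx (by simp [hempty])⟩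
  · obtain ⟨y, hy, hmin⟩ := Finset.exists_min_image _ (fun x => P.real {x}) hne
    exact ⟨P.real {y}, (Finset.mem_filter.1 hy).2, hatom.mono fun x hx => hmin x hx⟩

end FiniteSupport

section GaussianMoments

lemma integrable_stdG_quadratic (a b c : ℝ) :
    Integrable (fun z => a + b * z + c * z ^ 2) stdG := by
  have h₁ : Integrable (fun z : ℝ => z) stdG :=
    (memLp_id_gaussianReal' (μ := 0) (v := 1) 1 (by simp)).integrable le_rfl
  have h₂ : Integrable (fun z : ℝ => z ^ 2) stdG :=
    (memLp_id_gaussianReal' (μ := 0) (v := 1) 2 (by simp)).integrable_sq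
  exact ((integrable_const a).add (h₁.const_mul b)).add (h₂.const_mul c)

lemma integral_stdG_quadratic (a b c : ℝ) : ∫ z, (a + b * z + c * z ^ 2) ∂stdG = a + c := by
  have h₁ : Integrable (fun z : ℝ => z) stdG := by simpa using integrable_stdG_quadratic 0 1 0
  have h₂ : Integrable (fun z : ℝ => z ^ 2) stdG := by simpa using integrable_stdG_quadratic 0 0 1
  have hmean : ∫ z, z ∂stdG = 0 := integral_id_gaussianReal
  have hvar : ∫ z, z ^ 2 ∂stdG = 1 :=
    (variance_of_integral_eq_zero (X := id) (by fun_prop) hmean).symm.trans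
      ((variance_id_gaussianReal (μ := 0) (v := 1)).trans NNReal.coe_one)
  rw [integral_add (f := fun z => a + b * z) ((integrable_const a).add (h₁.const_mul b))
    (h₂.const_mul c), integral_add (integrable_const a) (h₁.const_mul b), integral_const_mul,
    integral_const_mul, hmean, hvar]
  simp

lemma integrable_stdG_exp (t c : ℝ) : Integrable (fun z => exp (t * z - c)) stdG := by
  simpa only [sub_eq_add_neg, exp_add, stdG] using (integrable_exp_mul_gaussianReal t).mul_const _

lemma integral_stdG_exp (t : ℝ) : ∫ z, exp (t * z - t ^ 2 / 2) ∂stdG = 1 := by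
  have hmgf : ∫ z, exp (t * z) ∂stdG = exp (t ^ 2 / 2) := by
    simpa [mgf, stdG] using congrFun (mgf_id_gaussianReal (μ := 0) (v := 1)) t
  simp only [sub_eq_add_neg, exp_add, integral_mul_const]
  rw [hmgf, ← exp_add, add_neg_cancel, exp_zero]

end GaussianMoments

section ScalarChannel

/-- Likelihood of the input `x`, relative to the input `0`, given the observation `√r xs + z` of a
scalar Gaussian channel with signal-to-noise ratio `r`. -/
def likelihood (r xs z x : ℝ) : ℝ := exp (r * xs * x + √r * z * x - r * x ^ 2 / 2)

/-- Evidence of the observation `√r xs + z` for the prior `Q`; `psiP Q r` is the mean of its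
logarithm. -/
def evidence (Q : Measure ℝ) (r xs z : ℝ) : ℝ := ∫ x, likelihood r xs z x ∂Q

variable {r : ℝ}

@[fun_prop]
lemma measurable_likelihood {α : Type*} [MeasurableSpace α] {f g h : α → ℝ} (hf : Measurable f)
    (hg : Measurable g) (hh : Measurable h) :
    Measurable fun u => likelihood r (f u) (g u) (h u) := by
  unfold likelihood
  fun_prop

lemma likelihood_pos (r xs z x : ℝ) : 0 < likelihood r xs z x := exp_pos _

lemma likelihood_le (hr : 0 ≤ r) (xs z x : ℝ) :
    likelihood r xs z x ≤ exp ((√r * xs + z) ^ 2 / 2) := by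
  refine exp_le_exp.2 (sub_nonneg.1 ?_)
  have hsquare : (√r * xs + z) ^ 2 / 2 - (r * xs * x + √r * z * x - r * x ^ 2 / 2) =
      (√r * xs + z - √r * x) ^ 2 / 2 := by
    linear_combination (x ^ 2 / 2 - xs * x) * (- sq_sqrt hr)
  rw [hsquare]
  positivity

lemma integral_likelihood_zero (hr : 0 ≤ r) (x : ℝ) : ∫ z, likelihood r 0 z x ∂stdG = 1 := by
  rw [← integral_stdG_exp (√r * x)]
  refine integral_congr_ae (ae_of_all _ fun z => congrArg exp ?_)
  rw [mul_pow, sq_sqrt hr]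
  ring

lemma integrable_likelihood_zero (x : ℝ) : Integrable (fun z => likelihood r 0 z x) stdG := by
  refine (integrable_stdG_exp (√r * x) (r * x ^ 2 / 2)).congr (ae_of_all _ fun z => ?_)
  simp only [likelihood]
  ring_nf

variable {Q : Measure ℝ} [IsProbabilityMeasure Q]

lemma measurable_evidence (xs : ℝ) : Measurable (evidence Q r xs) := by
  have h : Measurable fun u : ℝ × ℝ => likelihood r xs u.1 u.2 := by fun_prop
  exact h.stronglyMeasurable.integral_prod_right'.measurable

lemma integrable_likelihood (hr : 0 ≤ r) (xs z : ℝ) : Integrable (likelihood r xs z) Q :=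
  .of_mem_Icc 0 (exp ((√r * xs + z) ^ 2 / 2)) (Measurable.aemeasurable (by fun_prop))
    (ae_of_all _ fun x => ⟨(likelihood_pos r xs z x).le, likelihood_le hr xs z x⟩)

lemma evidence_pos (hr : 0 ≤ r) (xs z : ℝ) : 0 < evidence Q r xs z :=
  integral_exp_pos (integrable_likelihood hr xs z)

lemma evidence_le (hr : 0 ≤ r) (xs z : ℝ) : evidence Q r xs z ≤ exp ((√r * xs + z) ^ 2 / 2) := by
  simpa [evidence] using integral_mono (integrable_likelihood hr xs z) (integrable_const (μ := Q) _)
    (likelihood_le hr xs z)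

lemma measureReal_mul_likelihood_le_evidence (hr : 0 ≤ r) (xs z x : ℝ) :
    Q.real {x} * likelihood r xs z x ≤ evidence Q r xs z := by
  simpa [evidence, measureReal_def] using setIntegral_le_integral (s := {x})
    (integrable_likelihood (Q := Q) hr xs z) (ae_of_all _ fun x => (likelihood_pos r xs z x).le)

lemma log_measureReal_add_le_log_evidence (hr : 0 ≤ r) {x : ℝ} (hx : 0 < Q.real {x}) (xs z : ℝ) :
    log (Q.real {x}) + r * xs * x - r * x ^ 2 / 2 + √r * x * z + 0 * z ^ 2 ≤
      log (evidence Q r xs z) := by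
  have h := log_le_log (mul_pos hx (likelihood_pos r xs z x))
    (measureReal_mul_likelihood_le_evidence hr xs z x)
  rw [log_mul hx.ne' (likelihood_pos r xs z x).ne', likelihood, log_exp] at h
  linarith

lemma integrable_log_evidence (hr : 0 ≤ r) {x : ℝ} (hx : 0 < Q.real {x}) (xs : ℝ) :
    Integrable (fun z => log (evidence Q r xs z)) stdG := by
  refine integrable_of_le_of_le (measurable_evidence xs).log.aestronglyMeasurable
    (ae_of_all _ fun z => log_measureReal_add_le_log_evidence hr hx xs z) (ae_of_all _ fun z => ?_)
    (integrable_stdG_quadratic _ _ _)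
    (integrable_stdG_quadratic ((√r * xs) ^ 2 / 2) (√r * xs) (1 / 2))
  refine ((log_le_iff_le_exp (evidence_pos hr xs z)).2 (evidence_le hr xs z)).trans_eq ?_
  ring

lemma log_measureReal_add_le_integral_log_evidence (hr : 0 ≤ r) {x : ℝ} (hx : 0 < Q.real {x})
    (xs : ℝ) :
    log (Q.real {x}) + r * xs * x - r * x ^ 2 / 2 ≤ ∫ z, log (evidence Q r xs z) ∂stdG := by
  have h := integral_mono (integrable_stdG_quadratic _ _ _) (integrable_log_evidence hr hx xs)
    (log_measureReal_add_le_log_evidence hr hx xs)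
  rwa [integral_stdG_quadratic, add_zero] at h

lemma integrable_prod_likelihood_zero (hr : 0 ≤ r) :
    Integrable (fun u : ℝ × ℝ => likelihood r 0 u.1 u.2) (stdG.prod Q) := by
  refine (integrable_prod_iff' (Measurable.aestronglyMeasurable (by fun_prop))).2
    ⟨ae_of_all _ integrable_likelihood_zero, ?_⟩
  simp only [norm_of_nonneg (likelihood_pos _ _ _ _).le, integral_likelihood_zero hr]
  exact integrable_const 1

lemma integral_evidence_zero (hr : 0 ≤ r) : ∫ z, evidence Q r 0 z ∂stdG = 1 := by
  simp only [evidence]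
  rw [integral_integral_swap (integrable_prod_likelihood_zero hr)]
  simp only [integral_likelihood_zero hr, integral_const, probReal_univ, one_smul]

lemma integral_log_evidence_zero_nonpos (hr : 0 ≤ r) {x : ℝ} (hx : 0 < Q.real {x}) :
    ∫ z, log (evidence Q r 0 z) ∂stdG ≤ 0 := by
  have hi : Integrable (evidence Q r 0) stdG :=
    (integrable_prod_likelihood_zero hr).integral_prod_left
  have h := integral_mono (integrable_log_evidence hr hx 0) (hi.sub (integrable_const 1))
    fun z => log_le_sub_one_of_pos (evidence_pos hr 0 z)
  rwa [integral_sub' hi (integrable_const 1), integral_evidence_zero hr, integral_const,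
    probReal_univ, one_smul, sub_self] at h

end ScalarChannel

section SparsePrior

variable {P : Measure ℝ} {ρ : ℝ}

lemma integral_sparsePrior (h₀ : 0 ≤ ρ) (h₁ : ρ ≤ 1) {f : ℝ → ℝ} (hf : Integrable f P) :
    ∫ x, f x ∂sparsePrior ρ P = (1 - ρ) * f 0 + ρ * ∫ x, f x ∂P := by
  have hdirac : Integrable f (Measure.dirac 0) := integrable_dirac (by simp)
  rw [sparsePrior, integral_add_measure (hdirac.smul_measure ENNReal.ofReal_ne_top)
    (hf.smul_measure ENNReal.ofReal_ne_top), integral_smul_measure, integral_smul_measure,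
    integral_dirac, ENNReal.toReal_ofReal h₀, ENNReal.toReal_ofReal (sub_nonneg.2 h₁), smul_eq_mul,
    smul_eq_mul]

lemma isProbabilityMeasure_sparsePrior [IsProbabilityMeasure P] (h₀ : 0 ≤ ρ) (h₁ : ρ ≤ 1) :
    IsProbabilityMeasure (sparsePrior ρ P) := by
  refine ⟨?_⟩
  simp [sparsePrior, ← ENNReal.ofReal_add (sub_nonneg.2 h₁) h₀]

variable [IsFiniteMeasure P]

lemma measureReal_sparsePrior_singleton (h₀ : 0 ≤ ρ) (h₁ : ρ ≤ 1) (x : ℝ) :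
    (sparsePrior ρ P).real {x} = (1 - ρ) * (Measure.dirac 0).real {x} + ρ * P.real {x} := by
  have htop (a : ℝ) (μ : Measure ℝ) [IsFiniteMeasure μ] : (ENNReal.ofReal a • μ) {x} ≠ ⊤ :=
    ENNReal.mul_ne_top ENNReal.ofReal_ne_top (measure_ne_top _ _)
  rw [sparsePrior, measureReal_add_apply (htop _ _) (htop _ _), measureReal_ennreal_smul_apply,
    measureReal_ennreal_smul_apply, ENNReal.toReal_ofReal h₀,
    ENNReal.toReal_ofReal (sub_nonneg.2 h₁)]

lemma one_sub_le_measureReal_sparsePrior (h₀ : 0 ≤ ρ) (h₁ : ρ ≤ 1) :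
    1 - ρ ≤ (sparsePrior ρ P).real {0} := by
  rw [measureReal_sparsePrior_singleton h₀ h₁]
  simpa [measureReal_def] using mul_nonneg h₀ measureReal_nonneg

lemma mul_le_measureReal_sparsePrior (h₀ : 0 ≤ ρ) (h₁ : ρ ≤ 1) (x : ℝ) :
    ρ * P.real {x} ≤ (sparsePrior ρ P).real {x} := by
  rw [measureReal_sparsePrior_singleton h₀ h₁]
  exact le_add_of_nonneg_left (mul_nonneg (sub_nonneg.2 h₁) measureReal_nonneg)

end SparsePrior

section SparseScalarChannel

variable {P : Measure ℝ} [IsProbabilityMeasure P] {ρ r : ℝ}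

lemma log_evidence_sparsePrior_le (h₀ : 0 < ρ) (h₁ : ρ ≤ 1) (hr : 0 ≤ r) (xs z : ℝ) :
    log (evidence (sparsePrior ρ P) r xs z) ≤
      log 2 + max ((√r * xs + z) ^ 2 / 2 - |log ρ|) 0 := by
  have := isProbabilityMeasure_sparsePrior (P := P) h₀.le h₁
  have hzero : likelihood r xs z 0 = 1 := by simp [likelihood]
  have hP : ∫ x, likelihood r xs z x ∂P ≤ exp ((√r * xs + z) ^ 2 / 2) := evidence_le hr xs z
  have hρ : ρ * exp ((√r * xs + z) ^ 2 / 2) = exp ((√r * xs + z) ^ 2 / 2 - |log ρ|) := by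
    rw [abs_of_nonpos (log_nonpos h₀.le h₁), sub_neg_eq_add, exp_add, exp_log h₀, mul_comm]
  rw [log_le_iff_le_exp (evidence_pos hr xs z), exp_add, exp_log two_pos, evidence,
    integral_sparsePrior h₀.le h₁ (integrable_likelihood hr xs z), hzero, mul_one]
  have hmul := mul_le_mul_of_nonneg_left hP h₀.le
  have hle := exp_le_exp.2 (le_max_left ((√r * xs + z) ^ 2 / 2 - |log ρ|) 0)
  have hone := one_le_exp (le_max_right ((√r * xs + z) ^ 2 / 2 - |log ρ|) 0)
  linarith

/-- The right-hand side has Gaussian mean `max (t ^ 2 / 2 - L) 0 + O(√L)`, uniformly in `t`. -/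
lemma exists_max_sq_div_two_sub_le {L : ℝ} (hL : 0 ≤ L) (t : ℝ) :
    ∃ b : ℝ, ∀ z, max ((t + z) ^ 2 / 2 - L) 0 ≤
      (max (t ^ 2 / 2 - L) 0 + √L) + b * z + (√L + 2) * z ^ 2 := by
  have hleft := le_max_left (t ^ 2 / 2 - L) 0
  have hright := le_max_right (t ^ 2 / 2 - L) 0
  have hz (z : ℝ) : 0 ≤ √L * z ^ 2 := by positivity
  rcases le_or_gt (4 * L) (t ^ 2) with hlarge | hsmall
  · refine ⟨t, fun z => max_le ?_ ?_⟩
    · linarith [sqrt_nonneg L, hz z, sq_nonneg z]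
    · linarith [sqrt_nonneg L, hz z, sq_nonneg z, sq_nonneg (t / 2 + z)]
  · refine ⟨0, fun z => max_le ?_ (by linarith [sqrt_nonneg L, hz z, sq_nonneg z])⟩
    have ht : |t| ≤ 2 * √L := abs_le_of_sq_le_sq (by linarith [mul_pow 2 (√L) 2, sq_sqrt hL])
      (by positivity)
    have htz : t * z ≤ √L * (1 + z ^ 2) := by
      calc t * z ≤ |t| * |z| := (le_abs_self _).trans (abs_mul _ _).le
        _ ≤ 2 * √L * |z| := by gcongr
        _ = √L * (2 * |z| * 1) := by ring
        _ ≤ √L * (1 + z ^ 2) := by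
          gcongr
          linarith [two_mul_le_add_sq |z| 1, sq_abs z]
    linarith [sq_nonneg z]

lemma integral_log_evidence_sparsePrior_le (h₀ : 0 < ρ) (h₁ : ρ < 1) (hr : 0 ≤ r) (xs : ℝ) :
    ∫ z, log (evidence (sparsePrior ρ P) r xs z) ∂stdG ≤
      max (r * xs ^ 2 / 2 - |log ρ|) 0 + (3 + 2 * √|log ρ|) := by
  have := isProbabilityMeasure_sparsePrior (P := P) h₀.le h₁.le
  have hzero : 0 < (sparsePrior ρ P).real {0} :=
    (sub_pos.2 h₁).trans_le (one_sub_le_measureReal_sparsePrior h₀.le h₁.le)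
  obtain ⟨b, hb⟩ := exists_max_sq_div_two_sub_le (abs_nonneg (log ρ)) (√r * xs)
  have h := integral_mono (integrable_log_evidence hr hzero xs)
    (integrable_stdG_quadratic
      (log 2 + (max ((√r * xs) ^ 2 / 2 - |log ρ|) 0 + √|log ρ|)) b (√|log ρ| + 2))
    fun z => (log_evidence_sparsePrior_le h₀ h₁.le hr xs z).trans (by linarith [hb z])
  rw [integral_stdG_quadratic, mul_pow, sq_sqrt hr] at h
  linarith [log_two_lt_d9]

lemma neg_two_mul_le_log_one_sub (h₀ : 0 ≤ ρ) (h₁ : ρ ≤ 1 / 2) : -(2 * ρ) ≤ log (1 - ρ) := by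
  have hinv : (1 - ρ)⁻¹ ≤ 1 + 2 * ρ := by
    rw [inv_le_iff_one_le_mul₀ (by linarith)]
    nlinarith
  linarith [one_sub_inv_le_log_of_pos (by linarith : 0 < 1 - ρ)]

lemma neg_two_mul_le_integral_log_evidence_sparsePrior (h₀ : 0 ≤ ρ) (h₁ : ρ ≤ 1 / 2) (hr : 0 ≤ r)
    (xs : ℝ) : -(2 * ρ) ≤ ∫ z, log (evidence (sparsePrior ρ P) r xs z) ∂stdG := by
  have := isProbabilityMeasure_sparsePrior (P := P) h₀ (by linarith)
  have hzero := one_sub_le_measureReal_sparsePrior (P := P) h₀ (by linarith)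
  have h := log_measureReal_add_le_integral_log_evidence hr (by linarith) xs (x := 0)
    (Q := sparsePrior ρ P)
  linarith [neg_two_mul_le_log_one_sub h₀ h₁, log_le_log (by linarith) hzero]

/-- The two lower bounds come from the atoms of the prior at `0` and at `xs`. -/
lemma le_integral_log_evidence_sparsePrior (h₀ : 0 < ρ) (h₁ : ρ ≤ 1 / 2) (hr : 0 ≤ r) {c xs : ℝ}
    (hc : 0 < c) (hcP : c ≤ P.real {xs}) :
    max (r * xs ^ 2 / 2 - |log ρ|) 0 - (1 + |log c|) ≤
      ∫ z, log (evidence (sparsePrior ρ P) r xs z) ∂stdG := by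
  have := isProbabilityMeasure_sparsePrior (P := P) h₀.le (by linarith)
  have hatom : ρ * c ≤ (sparsePrior ρ P).real {xs} :=
    (mul_le_mul_of_nonneg_left hcP h₀.le).trans
      (mul_le_measureReal_sparsePrior h₀.le (by linarith) xs)
  have hzero := neg_two_mul_le_integral_log_evidence_sparsePrior (P := P) h₀.le h₁ hr xs
  have hxs := log_measureReal_add_le_integral_log_evidence hr
    ((mul_pos h₀ hc).trans_le hatom) xs
  have hlog := log_le_log (mul_pos h₀ hc) hatom
  rw [log_mul h₀.ne' hc.ne'] at hlog
  rw [sub_le_iff_le_add, abs_of_neg (log_neg h₀ (by linarith))]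
  exact max_le (by linarith [neg_abs_le (log c)]) (by linarith [abs_nonneg (log c)])

end SparseScalarChannel

section LimitPotential

/-- Mean of `r X ^ 2 / 2` capped at `b`: for `b = |log ρ|` this is, to leading order as `ρ → 0`, the
mutual information of the scalar channel with prior `sparsePrior ρ P`, divided by `ρ`. -/
def cappedMI (P : Measure ℝ) (b r : ℝ) : ℝ := ∫ x, min (r * x ^ 2 / 2) b ∂P

/-- Limit of the replica symmetric potential as `ρ → 0`; `f q` stands for the information of the
output channel. -/
def limitPotential (f : ℝ → ℝ) (P : Measure ℝ) (γ q r : ℝ) : ℝ :=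
  f q + cappedMI P (1 / γ) r - r * (secondMoment P - q) / 2

variable {P : Measure ℝ} {Δ : ℝ} {kA : ℕ} {PA : Measure (Fin kA → ℝ)} {φ : ℝ → (Fin kA → ℝ) → ℝ}
  {γ : ℝ}

lemma cappedMI_mul_mul {c : ℝ} (hc : 0 ≤ c) (b r : ℝ) :
    cappedMI P (c * b) (c * r) = c * cappedMI P b r := by
  simp only [cappedMI, ← integral_const_mul, mul_min_of_nonneg _ _ hc, mul_assoc, mul_div_assoc]

lemma iRS_sub_limitPotential (hγ : 0 < γ) {ρ : ℝ} (h₀ : 0 < ρ) (h₁ : ρ < 1) (q r : ℝ) :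
    iRS Δ PA φ P (γ * ρ * |log ρ|) ρ q r -
        limitPotential (fun q => IPout Δ PA φ q (secondMoment P)) P γ q r =
      (IP0 ρ P (γ * |log ρ| * r) - ρ * cappedMI P |log ρ| (γ * |log ρ| * r)) /
        (γ * ρ * |log ρ|) := by
  have hL : 0 < |log ρ| := abs_pos.2 (log_neg h₀ h₁).ne
  have hscale := cappedMI_mul_mul (P := P) (mul_pos hγ hL).le (1 / γ) r
  rw [show γ * |log ρ| * (1 / γ) = |log ρ| by field_simp] at hscale
  rw [hscale, iRS, limitPotential, show γ * ρ * |log ρ| / ρ * r = γ * |log ρ| * r by field_simp]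
  field_simp
  ring

lemma tendsto_add_sqrt_abs_log_div (C γ : ℝ) :
    Filter.Tendsto (fun ρ => (C + 2 * √|log ρ|) / (γ * |log ρ|)) (nhdsWithin 0 (Set.Ioi 0))
      (nhds 0) := by
  have hL : Filter.Tendsto (fun ρ => |log ρ|) (nhdsWithin 0 (Set.Ioi 0)) Filter.atTop :=
    Filter.tendsto_abs_atBot_atTop.comp tendsto_log_nhdsGT_zero
  have hu : Filter.Tendsto (fun u : ℝ => (C * u⁻¹ + 2 * (√u)⁻¹) / γ) Filter.atTop (nhds 0) := by
    simpa using ((tendsto_inv_atTop_zero.const_mul C).add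
      ((tendsto_inv_atTop_zero.comp tendsto_sqrt_atTop).const_mul 2)).div_const γ
  refine (hu.comp hL).congr fun ρ => ?_
  simp only [Function.comp_apply]
  rw [mul_comm γ, ← div_div, add_div, ← sqrt_div_self]
  ring

variable {T : Finset ℝ}

lemma cappedMI_eq_sub_integral_max [IsFiniteMeasure P] (hT : ∀ᵐ x ∂P, x ∈ T) (b r : ℝ) :
    cappedMI P b r = r * secondMoment P / 2 - ∫ x, max (r * x ^ 2 / 2 - b) 0 ∂P := by
  have hi := integrable_of_ae_mem_finset hT
  rw [secondMoment, ← integral_const_mul, ← integral_div, ← integral_sub (hi _) (hi _)]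
  refine integral_congr_ae (ae_of_all _ fun x => ?_)
  rcases le_total (r * x ^ 2 / 2) b with h | h <;> simp [h]

lemma psiP_sparsePrior [IsFiniteMeasure P] (hT : ∀ᵐ x ∂P, x ∈ T) {ρ : ℝ} (h₀ : 0 ≤ ρ)
    (h₁ : ρ ≤ 1) (r : ℝ) :
    psiP (sparsePrior ρ P) r = (1 - ρ) * ∫ z, log (evidence (sparsePrior ρ P) r 0 z) ∂stdG +
      ρ * ∫ xs, ∫ z, log (evidence (sparsePrior ρ P) r xs z) ∂stdG ∂P :=
  integral_sparsePrior h₀ h₁ (integrable_of_ae_mem_finset hT _)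

variable [IsProbabilityMeasure P]

lemma exists_abs_IP0_sub_cappedMI_le (hT : ∀ᵐ x ∂P, x ∈ T) :
    ∃ C, ∀ ρ r, 0 < ρ → ρ ≤ 1 / 2 → 0 ≤ r →
      |IP0 ρ P r - ρ * cappedMI P |log ρ| r| ≤ ρ * (C + 2 * √|log ρ|) := by
  obtain ⟨c, hc, hcP⟩ := exists_pos_le_measureReal_singleton hT
  refine ⟨3 + |log c|, fun ρ r h₀ h₁ hr => ?_⟩
  have hi := integrable_of_ae_mem_finset hT
  have hprob := isProbabilityMeasure_sparsePrior (P := P) h₀.le (by linarith)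
  set F₀ := ∫ z, log (evidence (sparsePrior ρ P) r 0 z) ∂stdG
  set F := ∫ xs, ∫ z, log (evidence (sparsePrior ρ P) r xs z) ∂stdG ∂P
  set D := ∫ x, max (r * x ^ 2 / 2 - |log ρ|) 0 ∂P
  have hF₀ : (1 - ρ) * F₀ ∈ Set.Icc (-(2 * ρ)) 0 := by
    have hlow : -(2 * ρ) ≤ F₀ := neg_two_mul_le_integral_log_evidence_sparsePrior h₀.le h₁ hr 0
    have hup : F₀ ≤ 0 := integral_log_evidence_zero_nonpos (Q := sparsePrior ρ P) hr
      ((by linarith : 0 < 1 - ρ).trans_le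
        (one_sub_le_measureReal_sparsePrior h₀.le (by linarith)))
    exact ⟨by nlinarith, mul_nonpos_of_nonneg_of_nonpos (by linarith) hup⟩
  have hFup : F ≤ D + (3 + 2 * √|log ρ|) := by
    have h := integral_mono (hi _) (hi _)
      (integral_log_evidence_sparsePrior_le (P := P) h₀ (by linarith) hr)
    rwa [integral_add (hi _) (hi _), integral_const, probReal_univ, one_smul] at h
  have hFlow : D - (1 + |log c|) ≤ F := by
    have h := integral_mono_ae (hi _) (hi _)
      (hcP.mono fun x hx => le_integral_log_evidence_sparsePrior h₀ h₁ hr hc hx)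
    rwa [integral_sub (hi _) (hi _), integral_const, probReal_univ, one_smul] at h
  have hdiff : IP0 ρ P r - ρ * cappedMI P |log ρ| r = ρ * D - ((1 - ρ) * F₀ + ρ * F) := by
    rw [cappedMI_eq_sub_integral_max hT, IP0, psiP_sparsePrior hT h₀.le (by linarith)]
    ring
  rw [hdiff, abs_le]
  have hup := mul_le_mul_of_nonneg_left hFup h₀.le
  have hlow := mul_le_mul_of_nonneg_left hFlow h₀.le
  have hc' := mul_nonneg h₀.le (abs_nonneg (log c))
  have hL := mul_nonneg h₀.le (sqrt_nonneg |log ρ|)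
  constructor <;> linarith [hF₀.1, hF₀.2]

lemma tendstoUniformly_iRS (hT : ∀ᵐ x ∂P, x ∈ T) (hγ : 0 < γ) :
    TendstoUniformly
      (fun ρ (p : ℝ × Set.Ici (0 : ℝ)) => iRS Δ PA φ P (γ * ρ * |log ρ|) ρ p.1 p.2)
      (fun p => limitPotential (fun q => IPout Δ PA φ q (secondMoment P)) P γ p.1 p.2)
      (nhdsWithin 0 (Set.Ioi 0)) := by
  obtain ⟨C, hC⟩ := exists_abs_IP0_sub_cappedMI_le hT
  refine Metric.tendstoUniformly_iff.2 fun ε hε => ?_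
  filter_upwards [(tendsto_add_sqrt_abs_log_div C γ).eventually_lt_const hε,
    Ioo_mem_nhdsGT (by norm_num : (0 : ℝ) < 1 / 2)] with ρ hρε ⟨h₀, h₁⟩ p
  have hL : 0 < |log ρ| := abs_pos.2 (log_neg h₀ (by linarith)).ne
  have hα : 0 < γ * ρ * |log ρ| := mul_pos (mul_pos hγ h₀) hL
  refine lt_of_le_of_lt ?_ hρε
  rw [dist_comm, dist_eq, iRS_sub_limitPotential hγ h₀ (by linarith), abs_div, abs_of_pos hα,
    ← mul_div_mul_left _ (γ * |log ρ|) h₀.ne', mul_left_comm ρ γ, ← mul_assoc γ]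
  exact div_le_div_of_nonneg_right
    (hC ρ _ h₀ h₁.le (mul_nonneg (mul_pos hγ hL).le p.2.2)) hα.le

end LimitPotential

section LimitVariationalProblem

/-- Value of the limiting variational problem when exactly the signal entries in `A` are
recovered; the candidates for the minimum are the sets `{x | v ≤ |x|}` and `∅`. -/
def recoveryObjective (f : ℝ → ℝ) (P : Measure ℝ) (γ : ℝ) (A : Set ℝ) : ℝ :=
  f (∫ x in A, x ^ 2 ∂P) + P.real A / γ

variable {P : Measure ℝ} {f : ℝ → ℝ} {γ r t q : ℝ} {A B : Set ℝ}

lemma recoveryObjective_congr (h : A =ᵐ[P] B) :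
    recoveryObjective f P γ A = recoveryObjective f P γ B := by
  rw [recoveryObjective, recoveryObjective, setIntegral_congr_set h, measureReal_congr h]

lemma recoveryObjective_amplitude_ge (t : ℝ) :
    recoveryObjective f P γ {x | t ≤ |x|} = f (truncSMge P t) + tailProb P t / γ := by
  have hmeas : MeasurableSet {x : ℝ | t ≤ |x|} := measurableSet_le measurable_const measurable_norm
  rw [recoveryObjective, ← integral_indicator hmeas, tailProb, measureReal_def, truncSMge]
  simp only [Set.indicator_apply, Set.mem_ofPred_eq]

lemma recoveryObjective_empty : recoveryObjective f P γ ∅ = f 0 := by simp [recoveryObjective]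

lemma midpointConcaveOn_limitPotential {s : Set ℝ} (hf : MidpointConcaveOn s f) (γ r : ℝ) :
    MidpointConcaveOn s fun q => limitPotential f P γ q r := by
  convert hf.add_linear (r / 2) (cappedMI P (1 / γ) r - r * secondMoment P / 2) using 2 with q
  rw [limitPotential]
  ring

lemma bddBelow_image_limitPotential (hf : BddBelow (Set.range f)) (hr : 0 ≤ r) :
    BddBelow ((fun q => limitPotential f P γ q r) '' Set.Ici 0) := by
  obtain ⟨m, hm⟩ := hf
  refine ⟨m + cappedMI P (1 / γ) r - r * secondMoment P / 2, ?_⟩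
  rintro _ ⟨q, hq, rfl⟩
  have hlin : 0 ≤ r * q := mul_nonneg hr hq
  simp only [limitPotential]
  linarith [hm (Set.mem_range_self q)]

lemma integrable_min_cap [IsFiniteMeasure P] (hint : Integrable (fun x => x ^ 2) P) (r b : ℝ) :
    Integrable (fun x => min (r * x ^ 2 / 2) b) P :=
  ((hint.const_mul r).div_const 2).inf (integrable_const b)

lemma setIntegral_sq_mem_Icc (hint : Integrable (fun x => x ^ 2) P) (A : Set ℝ) :
    ∫ x in A, x ^ 2 ∂P ∈ Set.Icc 0 (secondMoment P) :=
  ⟨integral_nonneg fun x => sq_nonneg x,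
    setIntegral_le_integral hint (ae_of_all _ fun x => sq_nonneg x)⟩

section FiniteMeasure

variable [IsFiniteMeasure P]

lemma limitPotential_setIntegral (hint : Integrable (fun x => x ^ 2) P) (hA : MeasurableSet A) :
    limitPotential f P γ (∫ x in A, x ^ 2 ∂P) r = f (∫ x in A, x ^ 2 ∂P) +
      ∫ x in A, min (r * x ^ 2 / 2) (1 / γ) ∂P +
        (∫ x in Aᶜ, min (r * x ^ 2 / 2) (1 / γ) ∂P - ∫ x in Aᶜ, r * x ^ 2 / 2 ∂P) := by
  rw [limitPotential, cappedMI, secondMoment, integral_div, integral_const_mul,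
    ← integral_add_compl hA hint, ← integral_add_compl hA (integrable_min_cap hint r (1 / γ))]
  ring

lemma limitPotential_setIntegral_le (hint : Integrable (fun x => x ^ 2) P) (hA : MeasurableSet A) :
    limitPotential f P γ (∫ x in A, x ^ 2 ∂P) r ≤ recoveryObjective f P γ A := by
  have hmin := integrable_min_cap hint r (1 / γ)
  have hin : ∫ x in A, min (r * x ^ 2 / 2) (1 / γ) ∂P ≤ ∫ _ in A, 1 / γ ∂P :=
    integral_mono hmin.integrableOn (integrable_const _) fun x => min_le_right _ _
  have hout : ∫ x in Aᶜ, min (r * x ^ 2 / 2) (1 / γ) ∂P ≤ ∫ x in Aᶜ, r * x ^ 2 / 2 ∂P :=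
    integral_mono hmin.integrableOn ((hint.const_mul r).div_const 2).integrableOn
      fun x => min_le_left _ _
  rw [setIntegral_const, smul_eq_mul, mul_one_div] at hin
  rw [limitPotential_setIntegral hint hA, recoveryObjective]
  linarith

/-- At `r = 2 / (γ t ^ 2)` the cap `1 / γ` is reached exactly at the amplitude `t`. -/
lemma limitPotential_setIntegral_eq (hint : Integrable (fun x => x ^ 2) P) (hγ : 0 < γ) (ht : 0 < t)
    (hA : MeasurableSet A) (hgt : ∀ᵐ x ∂P, t < |x| → x ∈ A)
    (hge : ∀ᵐ x ∂P, x ∈ A → t ≤ |x|) :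
    limitPotential f P γ (∫ x in A, x ^ 2 ∂P) (2 / (γ * t ^ 2)) = recoveryObjective f P γ A := by
  have hscale (x : ℝ) : 2 / (γ * t ^ 2) * x ^ 2 / 2 = 1 / γ * (|x| / t) ^ 2 := by
    rw [div_pow, sq_abs]
    field_simp
  have hin : ∫ x in A, min (2 / (γ * t ^ 2) * x ^ 2 / 2) (1 / γ) ∂P = ∫ _ in A, 1 / γ ∂P := by
    refine setIntegral_congr_ae hA ?_
    filter_upwards [hge] with x hx hxA
    rw [hscale]
    exact min_eq_right (le_mul_of_one_le_right (by positivity)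
      (one_le_pow₀ ((one_le_div ht).2 (hx hxA))))
  have hout : ∫ x in Aᶜ, min (2 / (γ * t ^ 2) * x ^ 2 / 2) (1 / γ) ∂P =
      ∫ x in Aᶜ, 2 / (γ * t ^ 2) * x ^ 2 / 2 ∂P := by
    refine setIntegral_congr_ae hA.compl ?_
    filter_upwards [hgt] with x hx hxA
    rw [hscale]
    exact min_eq_left (mul_le_of_le_one_right (by positivity) (pow_le_one₀ (by positivity)
      ((div_le_one ht).2 (not_lt.1 fun h => hxA (hx h)))))
  rw [limitPotential_setIntegral hint hA, hin, hout, sub_self, add_zero, setIntegral_const,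
    smul_eq_mul, mul_one_div, recoveryObjective]

/-- For fixed `r` the potential is midpoint concave in `q`, so the two values where recovering the
amplitude `t` starts and ends control everything in between. -/
lemma min_recoveryObjective_le_limitPotential (hint : Integrable (fun x => x ^ 2) P)
    (hγ : 0 < γ) (ht : 0 < t)
    (hf : MidpointConcaveOn (Set.Icc 0 (secondMoment P)) f) (hbdd : BddBelow (Set.range f))
    (hq : q ∈ Set.Icc (∫ x in {x | t < |x|}, x ^ 2 ∂P) (∫ x in {x | t ≤ |x|}, x ^ 2 ∂P)) :
    min (recoveryObjective f P γ {x | t < |x|}) (recoveryObjective f P γ {x | t ≤ |x|}) ≤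
      limitPotential f P γ q (2 / (γ * t ^ 2)) := by
  have hlo := setIntegral_sq_mem_Icc hint {x | t < |x|}
  have hhi := setIntegral_sq_mem_Icc hint {x | t ≤ |x|}
  have hlt := limitPotential_setIntegral_eq (f := f) hint hγ ht
    (measurableSet_lt measurable_const measurable_norm : MeasurableSet {x : ℝ | t < |x|})
    (ae_of_all _ fun x hx => hx) (ae_of_all _ fun x hx => le_of_lt hx)
  have hle := limitPotential_setIntegral_eq (f := f) hint hγ ht
    (measurableSet_le measurable_const measurable_norm : MeasurableSet {x : ℝ | t ≤ |x|})
    (ae_of_all _ fun x hx => le_of_lt hx) (ae_of_all _ fun x hx => hx)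
  rw [← hlt, ← hle]
  exact ((midpointConcaveOn_limitPotential hf γ _).mono (Set.Icc_subset_Icc hlo.1 hhi.2)).min_le
    ((bddBelow_image_limitPotential hbdd (by positivity)).mono
      (Set.image_mono fun x hx => hlo.1.trans hx.1)) hq

end FiniteMeasure

lemma ae_eq_empty_or_exists_ae_eq_amplitude_ge {T : Finset ℝ} (hT : ∀ᵐ x ∂P, |x| ∈ T) (t : ℝ) :
    {x | t < |x|} =ᵐ[P] (∅ : Set ℝ) ∨
      ∃ t' ∈ T, t < t' ∧ {x | t < |x|} =ᵐ[P] {x | t' ≤ |x|} := by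
  rcases (T.filter (t < ·)).eq_empty_or_nonempty with hempty | hne
  · refine .inl (Filter.eventuallyEq_set.2 ?_)
    filter_upwards [hT] with x hx
    simpa using Finset.filter_eq_empty_iff.1 hempty hx
  · have hmem := Finset.mem_filter.1 (Finset.min'_mem _ hne)
    refine .inr ⟨_, hmem.1, hmem.2, Filter.eventuallyEq_set.2 ?_⟩
    filter_upwards [hT] with x hx
    exact ⟨fun h => Finset.min'_le _ _ (Finset.mem_filter.2 ⟨hx, h⟩), hmem.2.trans_le⟩

variable [IsProbabilityMeasure P]

lemma bddAbove_range_limitPotential (hint : Integrable (fun x => x ^ 2) P)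
    (hq : q ≤ secondMoment P) :
    BddAbove (Set.range fun r : Set.Ici (0 : ℝ) => limitPotential f P γ q r) := by
  refine ⟨f q + 1 / γ, ?_⟩
  rintro _ ⟨⟨r, hr⟩, rfl⟩
  have hcap : cappedMI P (1 / γ) r ≤ 1 / γ := by
    simpa [cappedMI] using integral_mono (integrable_min_cap hint r (1 / γ))
      (integrable_const (1 / γ)) fun x => min_le_right _ _
  have hlin : 0 ≤ r * (secondMoment P - q) := mul_nonneg hr (sub_nonneg.2 hq)
  simp only [limitPotential]
  linarith

lemma exists_amplitude_mem_Icc {T : Finset ℝ} (hT : ∀ᵐ x ∂P, |x| ∈ T)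
    (hq : q ∈ Set.Icc 0 (secondMoment P)) :
    ∃ t ∈ T, q ∈ Set.Icc (∫ x in {x | t < |x|}, x ^ 2 ∂P) (∫ x in {x | t ≤ |x|}, x ^ 2 ∂P) := by
  set recovered := T.filter fun t => q ≤ ∫ x in {x | t ≤ |x|}, x ^ 2 ∂P
  have hne : recovered.Nonempty := by
    obtain ⟨x, hx⟩ := hT.exists
    have hT' : T.Nonempty := ⟨_, hx⟩
    refine ⟨T.min' hT', Finset.mem_filter.2 ⟨T.min'_mem hT', hq.2.trans_eq ?_⟩⟩
    rw [setIntegral_eq_integral_of_ae_compl_eq_zero, secondMoment]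
    filter_upwards [hT] with y hy hyt using absurd (T.min'_le _ hy) hyt
  obtain ⟨hmem, hle⟩ := Finset.mem_filter.1 (recovered.max'_mem hne)
  refine ⟨_, hmem, ?_, hle⟩
  rcases ae_eq_empty_or_exists_ae_eq_amplitude_ge hT (recovered.max' hne) with
    hempty | ⟨t', ht', hlt, heq⟩
  · rw [setIntegral_congr_set hempty, setIntegral_empty]
    exact hq.1
  · rw [setIntegral_congr_set heq]
    by_contra! hq'
    exact hlt.not_ge (recovered.le_max' _ (Finset.mem_filter.2 ⟨ht', hq'.le⟩))

lemma exists_le_limitPotential {T : Finset ℝ} (hT : ∀ᵐ x ∂P, |x| ∈ T) (hpos : ∀ t ∈ T, 0 < t)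
    (hint : Integrable (fun x => x ^ 2) P) (hγ : 0 < γ)
    (hf : MidpointConcaveOn (Set.Icc 0 (secondMoment P)) f) (hbdd : BddBelow (Set.range f))
    {M : ℝ} (hM : ∀ t ∈ T, M ≤ recoveryObjective f P γ {x | t ≤ |x|})
    (hM₀ : M ≤ recoveryObjective f P γ ∅) (hq : q ∈ Set.Icc 0 (secondMoment P)) :
    ∃ r : Set.Ici (0 : ℝ), M ≤ limitPotential f P γ q r := by
  obtain ⟨t, ht, hqt⟩ := exists_amplitude_mem_Icc hT hq
  have hr : 0 ≤ 2 / (γ * t ^ 2) := by positivity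
  refine ⟨⟨_, hr⟩, le_trans (le_min ?_ (hM t ht))
    (min_recoveryObjective_le_limitPotential hint hγ (hpos t ht) hf hbdd hqt)⟩
  rcases ae_eq_empty_or_exists_ae_eq_amplitude_ge hT t with hempty | ⟨t', ht', -, heq⟩
  · rwa [recoveryObjective_congr hempty]
  · rw [recoveryObjective_congr heq]
    exact hM t' ht'

end LimitVariationalProblem

section InfSup

lemma tendsto_iInf_iSup_of_tendstoUniformly {τ ι κ : Type*} {l : Filter τ} {J : τ → ι → κ → ℝ}
    {F : ι → κ → ℝ} {M : ℝ}
    (hJ : TendstoUniformly (fun t (p : ι × κ) => J t p.1 p.2) (fun p => F p.1 p.2) l)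
    (hbdd : ∀ i, BddAbove (Set.range (F i))) (hlow : ∀ i, ∃ k, M ≤ F i k)
    (hup : ∃ i, ∀ k, F i k ≤ M) :
    Filter.Tendsto (fun t => ⨅ i, ⨆ k, J t i k) l (nhds M) := by
  obtain ⟨i₀, hi₀⟩ := hup
  have : Nonempty ι := ⟨i₀⟩
  have : Nonempty κ := ⟨(hlow i₀).choose⟩
  rw [Metric.tendsto_nhds]
  intro ε hε
  filter_upwards [Metric.tendstoUniformly_iff.1 hJ (ε / 2) (half_pos hε)] with t ht
  have hclose (i : ι) (k : κ) : |F i k - J t i k| < ε / 2 := ht (i, k)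
  have hsup (i : ι) : M - ε / 2 ≤ ⨆ k, J t i k := by
    obtain ⟨b, hb⟩ := hbdd i
    obtain ⟨k, hk⟩ := hlow i
    have hbddJ : BddAbove (Set.range (J t i)) := by
      refine ⟨b + ε / 2, ?_⟩
      rintro _ ⟨k, rfl⟩
      linarith [(abs_lt.1 (hclose i k)).1, hb (Set.mem_range_self k)]
    linarith [le_ciSup hbddJ k, (abs_lt.1 (hclose i k)).2]
  have hinf : ⨅ i, ⨆ k, J t i k ≤ M + ε / 2 :=
    (ciInf_le ⟨M - ε / 2, Set.forall_mem_range.2 hsup⟩ i₀).trans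
      (ciSup_le fun k => by linarith [(abs_lt.1 (hclose i₀ k)).1, hi₀ k])
  rw [dist_eq, abs_lt]
  constructor <;> linarith [le_ciInf hsup]

end InfSup

section RecoverySets

/-- The candidates `{x | v k ≤ |x|}` for `k < K`, followed by `∅`, which plays the role of
`v K = ∞`. -/
def recoverySet {K : ℕ} (v : Fin K → ℝ) (k : Fin (K + 1)) : Set ℝ :=
  if h : (k : ℕ) < K then {x | v ⟨k, h⟩ ≤ |x|} else ∅

variable {K : ℕ} {v : Fin K → ℝ} {P : Measure ℝ}

lemma measurableSet_recoverySet (k : Fin (K + 1)) : MeasurableSet (recoverySet v k) := by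
  unfold recoverySet
  split_ifs
  · exact measurableSet_le measurable_const measurable_norm
  · exact MeasurableSet.empty

lemma recoveryObjective_recoverySet (f : ℝ → ℝ) (γ : ℝ) (k : Fin (K + 1)) :
    recoveryObjective f P γ (recoverySet v k) = if h : (k : ℕ) < K then
      f (truncSMge P (v ⟨k, h⟩)) + tailProb P (v ⟨k, h⟩) / γ else f 0 := by
  unfold recoverySet
  split_ifs
  · exact recoveryObjective_amplitude_ge _
  · exact recoveryObjective_empty

lemma exists_forall_limitPotential_le [IsFiniteMeasure P] {f : ℝ → ℝ} {γ : ℝ}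
    (hint : Integrable (fun x => x ^ 2) P) :
    ∃ q ∈ Set.Icc 0 (secondMoment P), ∀ r,
      limitPotential f P γ q r ≤ ⨅ k, recoveryObjective f P γ (recoverySet v k) := by
  obtain ⟨k, hk⟩ :=
    exists_eq_ciInf_of_finite (f := fun k => recoveryObjective f P γ (recoverySet v k))
  exact ⟨_, setIntegral_sq_mem_Icc hint (recoverySet v k), fun r =>
    (limitPotential_setIntegral_le hint (measurableSet_recoverySet k)).trans hk.le⟩

lemma exists_iInf_le_limitPotential [IsProbabilityMeasure P] {f : ℝ → ℝ} {γ q : ℝ} (hγ : 0 < γ)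
    (hv : ∀ k, 0 < v k) (hsupp : ∀ᵐ x ∂P, ∃ k, |x| = v k) (hint : Integrable (fun x => x ^ 2) P)
    (hf : MidpointConcaveOn (Set.Icc 0 (secondMoment P)) f) (hbdd : BddBelow (Set.range f))
    (hq : q ∈ Set.Icc 0 (secondMoment P)) :
    ∃ r : Set.Ici (0 : ℝ),
      ⨅ k, recoveryObjective f P γ (recoverySet v k) ≤ limitPotential f P γ q r := by
  classical
  have hle (k : Fin (K + 1)) : ⨅ k, recoveryObjective f P γ (recoverySet v k) ≤
      recoveryObjective f P γ (recoverySet v k) := ciInf_le (Set.finite_range _).bddBelow k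
  refine exists_le_limitPotential (T := Finset.univ.image v) ?_ ?_ hint hγ hf hbdd ?_ ?_ hq
  · filter_upwards [hsupp] with x ⟨k, hk⟩ using by simp [hk]
  · simpa using hv
  · simpa [recoverySet] using fun k => hle (Fin.castSucc k)
  · simpa [recoverySet] using hle (Fin.last K)

lemma exists_finset_ae_mem (hsupp : ∀ᵐ x ∂P, ∃ k, |x| = v k) :
    ∃ T : Finset ℝ, ∀ᵐ x ∂P, x ∈ T := by
  classical
  refine ⟨Finset.univ.image v ∪ Finset.univ.image fun k => -v k, ?_⟩
  filter_upwards [hsupp] with x ⟨k, hk⟩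
  rcases eq_or_eq_neg_of_abs_eq hk with rfl | rfl <;> simp

theorem limit_variational_problem_discrete_prior_general
    {Δ : ℝ} (hΔ : 0 < Δ) {kA : ℕ} {PA : Measure (Fin kA → ℝ)} [IsProbabilityMeasure PA]
    {φ : ℝ → (Fin kA → ℝ) → ℝ} (hφ : Measurable fun p : ℝ × (Fin kA → ℝ) => φ p.1 p.2)
    (hB : ∃ B, ∀ x a, |φ x a| ≤ B) (hv : ∀ k, 0 < v k) [IsProbabilityMeasure P]
    (hsupp : ∀ᵐ x ∂P, ∃ k, |x| = v k) {γ : ℝ} (hγ : 0 < γ) :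
    Filter.Tendsto
      (fun ρ : ℝ => ⨅ q : Set.Icc (0 : ℝ) (secondMoment P), ⨆ r : Set.Ici (0 : ℝ),
        iRS Δ PA φ P (γ * ρ * |log ρ|) ρ q r)
      (nhdsWithin 0 (Set.Ioi 0))
      (nhds (⨅ k : Fin (K + 1), if h : (k : ℕ) < K then
        IPout Δ PA φ (truncSMge P (v ⟨k, h⟩)) (secondMoment P) + tailProb P (v ⟨k, h⟩) / γ
        else IPout Δ PA φ 0 (secondMoment P))) := by
  obtain ⟨T, hT⟩ := exists_finset_ae_mem hsupp
  have hint : Integrable (fun x => x ^ 2) P := integrable_of_ae_mem_finset hT _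
  have hconc := midpointConcaveOn_IPout (PA := PA) hφ hB hΔ (secondMoment P)
  have hbdd := bddBelow_range_IPout (PA := PA) hφ hB hΔ (secondMoment P)
  simp_rw [← recoveryObjective_recoverySet fun q => IPout Δ PA φ q (secondMoment P)]
  obtain ⟨q, hq, hmin⟩ := exists_forall_limitPotential_le (v := v) (γ := γ)
    (f := fun q => IPout Δ PA φ q (secondMoment P)) hint
  exact tendsto_iInf_iSup_of_tendstoUniformly
    ((tendstoUniformly_iRS hT hγ).comp (Prod.map Subtype.val id))
    (fun q => bddAbove_range_limitPotential hint q.2.2)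
    (fun q => exists_iInf_le_limitPotential hγ hv hsupp hint hconc hbdd q.2)
    ⟨⟨q, hq⟩, fun r => hmin r⟩

end RecoverySets

/-- Proposition 9 of the paper: the limit as ρ → 0⁺ of the
replica-symmetric variational problem for a discrete prior with finite support. -/
theorem limit_variational_problem_discrete_prior
    (Δ : ℝ) (hΔ : 0 < Δ)
    (kA : ℕ) (PA : Measure (Fin kA → ℝ)) [IsProbabilityMeasure PA]
    (φ φ' φ'' : ℝ → (Fin kA → ℝ) → ℝ)
    -- (H2)
    (hφmeas : Measurable fun p : ℝ × (Fin kA → ℝ) => φ p.1 p.2)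
    (hφbd : ∃ B, ∀ x a, |φ x a| ≤ B)
    (hd1 : ∀ a x, HasDerivAt (fun t => φ t a) (φ' x a) x)
    (hd2 : ∀ a x, HasDerivAt (fun t => φ' t a) (φ'' x a) x)
    (hφ'bd : ∃ B, ∀ x a, |φ' x a| ≤ B)
    (hφ''bd : ∃ B, ∀ x a, |φ'' x a| ≤ B)
    (hφ'cont : ∀ a, Continuous fun x => φ' x a)
    (hφ''cont : ∀ a, Continuous fun x => φ'' x a)
    -- discrete prior with finite support, 0 < v 0 < ... < v (K-1)
    (K : ℕ) (hK : 0 < K) (v : Fin K → ℝ) (hvpos : 0 < v ⟨0, hK⟩) (hvmono : StrictMono v)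
    (P0 : Measure ℝ) [IsProbabilityMeasure P0]
    (hsupp : ∀ᵐ x ∂P0, ∃ k : Fin K, x = v k ∨ x = -(v k))
    (γ : ℝ) (hγ : 0 < γ) :
    Filter.Tendsto
      (fun ρ : ℝ =>
        ⨅ q : Set.Icc (0 : ℝ) (secondMoment P0), ⨆ r : Set.Ici (0 : ℝ),
          iRS Δ PA φ P0 (γ * ρ * |Real.log ρ|) ρ q r)
      (nhdsWithin 0 (Set.Ioi 0))
      (nhds (⨅ k : Fin (K + 1),
        if h : (k : ℕ) < K then
          IPout Δ PA φ (truncSMge P0 (v ⟨k, h⟩)) (secondMoment P0)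
            + tailProb P0 (v ⟨k, h⟩) / γ
        else IPout Δ PA φ 0 (secondMoment P0))) := by
  have hv (k : Fin K) : 0 < v k := hvpos.trans_le (hvmono.monotone (Fin.le_def.2 (Nat.zero_le _)))
  exact limit_variational_problem_discrete_prior_general hΔ hφmeas hφbd hv
    (hsupp.mono fun x ⟨k, hk⟩ => ⟨k, (abs_eq (hv k).le).2 hk⟩) hγ

end GLM
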